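/- If λ_1 and λ_2 are Dyck paths of order n whose chord posets P_{λ_1} and P_{λ_2} are isomorphic as posets, then the generating functions of their cover-inclusive Dyck tilings by the discrepancy statistic coincide: Σ_{T ∈ D(λ_1,*)} z^{dis(T)} = Σ_{T ∈ D(λ_2,*)} z^{dis(T)}. -/

import Mathlib

open Finset

noncomputable section

/-- A Dyck path of order `n`: a word of `2n` steps (`true` = up-step `(+1,+1)`,
`false` = down-step `(+1,-1)`) from `(-n,0)` to `(n,0)` staying weakly above the x-axis. -/
structure DyckPath (n : ℕ) where
  step : Fin (2 * n) → Bool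
  balanced : (Finset.univ.filter fun i => step i = true).card = n
  nonneg : ∀ k : ℕ, k ≤ 2 * n →
    (Finset.univ.filter fun i : Fin (2 * n) => (i : ℕ) < k ∧ step i = false).card ≤
      (Finset.univ.filter fun i : Fin (2 * n) => (i : ℕ) < k ∧ step i = true).card

namespace DyckPath

/-- Height of the path above column `x` (columns run from `-n` to `n`). -/
def ht {n : ℕ} (P : DyckPath n) (x : ℤ) : ℤ :=
  ((Finset.univ.filter fun i : Fin (2 * n) => ((i : ℕ) : ℤ) < x + n ∧ P.step i = true).card : ℤ) -
    ((Finset.univ.filter fun i : Fin (2 * n) => ((i : ℕ) : ℤ) < x + n ∧ P.step i = false).card : ℤ)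

/-- Height of the path at lattice point number `k`, `0 ≤ k ≤ 2n`
(point `k` lies at column `k - n`). -/
def pt {n : ℕ} (P : DyckPath n) (k : ℕ) : ℤ := P.ht ((k : ℤ) - n)

end DyckPath

/-- `IsChord P p q`: the up-step at (0-indexed) position `p` matches the down-step at
position `q`, forming a chord of `P`. -/
def IsChord {n : ℕ} (P : DyckPath n) (p q : ℕ) : Prop :=
  p < q ∧ q < 2 * n ∧
    (∃ hp : p < 2 * n, P.step ⟨p, hp⟩ = true) ∧
    (∃ hq : q < 2 * n, P.step ⟨q, hq⟩ = false) ∧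
    P.pt (q + 1) = P.pt p ∧
    ∀ m : ℕ, p < m → m ≤ q → P.pt p < P.pt m

/-- A natural labeling of the chord poset of `P`: the chord labeled `i` has its up-step at
(0-indexed) position `l i` and matching down-step at position `r i`; distinct labels name
distinct chords; and if one chord is nested inside another it receives a larger label. -/
structure ChordLabeling {n : ℕ} (P : DyckPath n) where
  l : Fin n → ℕ
  r : Fin n → ℕ
  chord : ∀ i, IsChord P (l i) (r i)
  inj : Function.Injective l
  natural : ∀ i j : Fin n, l j < l i → r i < r j → j < i

/-- The length of the chord labeled `i`: the number of up steps of `P` between and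
including its two endpoints. -/
def chordLen {n : ℕ} {P : DyckPath n} (C : ChordLabeling P) (i : Fin n) : ℕ :=
  (Finset.univ.filter fun m : Fin (2 * n) =>
    C.l i ≤ (m : ℕ) ∧ (m : ℕ) ≤ C.r i ∧ P.step m = true).card

/-- The growth sequence `p_1, …, p_n` associated with a natural chord labeling:
`p i = #{j<i : l j < l i} + #{j<i : r j < l i}`. -/
def seqOf {n : ℕ} {P : DyckPath n} (C : ChordLabeling P) (i : Fin n) : ℕ :=
  (Finset.univ.filter fun j : Fin n => j < i ∧ C.l j < C.l i).card +
    (Finset.univ.filter fun j : Fin n => j < i ∧ C.r j < C.l i).card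

/-- `σ` is the standardization of the word `w` (with distinct letters). -/
def IsStandardization {n : ℕ} (w : Fin n → ℕ) (σ : Equiv.Perm (Fin n)) : Prop :=
  ∀ i j : Fin n, σ i < σ j ↔ w i < w j

/-- `σ ∈ 𝓛(P_λ)`: σ is `L₀ ∘ L⁻¹` for some natural labeling `L` of the chord poset,
equivalently the standardization of the word of left endpoints of a natural labeling. -/
def LinExt {n : ℕ} (P : DyckPath n) (σ : Equiv.Perm (Fin n)) : Prop :=
  ∃ C : ChordLabeling P, IsStandardization C.l σ

/-- Successor index in `Fin n` (used only under the guard `i+1 < n`). -/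
def nextIdx {n : ℕ} (i : Fin n) : Fin n := ⟨((i : ℕ) + 1) % n, Nat.mod_lt _ i.pos⟩

/-- Descent set of a word: positions `i` with `i+1 < n` and `w i > w (i+1)`. -/
def descentFinset {n : ℕ} (w : Fin n → ℕ) : Finset (Fin n) :=
  Finset.univ.filter fun i => (i : ℕ) + 1 < n ∧ w (nextIdx i) < w i

/-- Number of inversions of a word. -/
def wordInv {n : ℕ} (w : Fin n → ℕ) : ℕ :=
  (Finset.univ.filter fun p : Fin n × Fin n => p.1 < p.2 ∧ w p.2 < w p.1).card

/-- The word of values of a permutation. -/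
def permWord {n : ℕ} (σ : Equiv.Perm (Fin n)) : Fin n → ℕ := fun i => (σ i : ℕ)

/-- inv(σ). -/
def permInv {n : ℕ} (σ : Equiv.Perm (Fin n)) : ℕ := wordInv (permWord σ)

/-- des(σ). -/
def permDes {n : ℕ} (σ : Equiv.Perm (Fin n)) : ℕ := (descentFinset (permWord σ)).card

/-- `REM_i(w) = {k > i : w i > w k > w (i+1)}`, the right embraced numbers. -/
def remSet {n : ℕ} (w : Fin n → ℕ) (i : Fin n) : Finset (Fin n) :=
  Finset.univ.filter fun k => i < k ∧ w (nextIdx i) < w k ∧ w k < w i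

/-- desdif(σ) = Σ_{i ∈ DES σ} (σ i − σ (i+1)). -/
def desdif {n : ℕ} (σ : Equiv.Perm (Fin n)) : ℕ :=
  ∑ i ∈ descentFinset (permWord σ), (permWord σ i - permWord σ (nextIdx i))

/-- res(σ) = Σ_{i ∈ DES σ} #{k < i : σ i > σ k > σ (i+1)}. -/
def resStat {n : ℕ} (σ : Equiv.Perm (Fin n)) : ℕ :=
  ∑ i ∈ descentFinset (permWord σ),
    (Finset.univ.filter fun k : Fin n =>
      k < i ∧ permWord σ (nextIdx i) < permWord σ k ∧ permWord σ k < permWord σ i).card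

/-- The Mahonian statistic mad(σ) = desdif(σ) + res(σ). -/
def mad {n : ℕ} (σ : Equiv.Perm (Fin n)) : ℕ := desdif σ + resStat σ

/-- σ avoids the pattern 231. -/
def Avoids231 {n : ℕ} (σ : Equiv.Perm (Fin n)) : Prop :=
  ¬∃ i j k : Fin n, i < j ∧ j < k ∧ σ k < σ i ∧ σ i < σ j

/-- The boxes of the skew shape `lam/mu` (with `mu` weakly above `lam`), each box
recorded by its bottom corner (a lattice point `(x, z)` with `z ≡ x + n (mod 2)`). -/
def skewCells {n : ℕ} (lam mu : DyckPath n) : Finset (ℤ × ℤ) :=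
  ((Finset.Icc (-(n : ℤ)) n) ×ˢ (Finset.Icc (0 : ℤ) n)).filter fun c =>
    lam.ht c.1 ≤ c.2 ∧ c.2 + 2 ≤ mu.ht c.1 ∧ (c.2 - c.1 - n) % 2 = 0

/-- A Dyck tile, recorded by the set of bottom corners of its boxes: these form
a Dyck-path shape, i.e. a ±1-step lattice path whose two ends are lowest. -/
def IsDyckTile (t : Finset (ℤ × ℤ)) : Prop :=
  ∃ (a b : ℤ) (f : ℤ → ℤ), a ≤ b ∧
    (∀ x : ℤ, a ≤ x → x < b → f (x + 1) = f x + 1 ∨ f (x + 1) = f x - 1) ∧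
    f b = f a ∧ (∀ x : ℤ, a ≤ x → x ≤ b → f a ≤ f x) ∧
    t = (Finset.Icc a b).image fun x => (x, f x)

/-- A Dyck tiling of order `n`: a tiling of the skew shape between two Dyck paths of
order `n` by Dyck tiles. -/
structure DyckTiling (n : ℕ) where
  lower : DyckPath n
  upper : DyckPath n
  below : ∀ x : ℤ, lower.ht x ≤ upper.ht x
  tiles : Finset (Finset (ℤ × ℤ))
  isDyck : ∀ t ∈ tiles, IsDyckTile t
  disj : ∀ t ∈ tiles, ∀ u ∈ tiles, t ≠ u → Disjoint t u
  cover : tiles.biUnion id = skewCells lower upper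

namespace DyckTiling

/-- Number of boxes of the skew shape. -/
def area {n : ℕ} (T : DyckTiling n) : ℕ := (skewCells T.lower T.upper).card

/-- Number of tiles. -/
def numTiles {n : ℕ} (T : DyckTiling n) : ℕ := T.tiles.card

/-- art(T) = (area(T) + tiles(T)) / 2. -/
def art {n : ℕ} (T : DyckTiling n) : ℕ := (T.area + T.numTiles) / 2

/-- dis(T): the number of step positions where the lower path steps down while the
upper path steps up. -/
def dis {n : ℕ} (T : DyckTiling n) : ℕ :=
  (Finset.univ.filter fun i : Fin (2 * n) =>
    T.lower.step i = false ∧ T.upper.step i = true).card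

/-- Cover-inclusiveness: whenever a tile has a box strictly above a box of another tile,
its horizontal extent is contained in that of the other tile. -/
def CoverInclusive {n : ℕ} (T : DyckTiling n) : Prop :=
  ∀ t ∈ T.tiles, ∀ u ∈ T.tiles,
    (∃ p ∈ t, ∃ q ∈ u, (p : ℤ × ℤ).1 = (q : ℤ × ℤ).1 ∧ (q : ℤ × ℤ).2 < (p : ℤ × ℤ).2) →
    ∀ p ∈ t, ∃ y : ℤ, ((p : ℤ × ℤ).1, y) ∈ u

end DyckTiling

/-- Height function of the spread at column `s` of a Dyck path. -/
def spreadHt {n : ℕ} (P : DyckPath n) (s x : ℤ) : ℤ :=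
  if x < s then P.ht (x + 1) else if x = s then P.ht s + 1 else P.ht (x - 1)

/-- Spread of a tile at column `s`: points left of `s` move left, points right of `s`
move right, and a point at column `s` is duplicated upward. -/
def spreadTile (s : ℤ) (t : Finset (ℤ × ℤ)) : Finset (ℤ × ℤ) :=
  ((t.filter fun p => p.1 ≤ s).image fun p => (p.1 - 1, p.2)) ∪
    ((t.filter fun p => p.1 = s).image fun p => (p.1, p.2 + 1)) ∪
    ((t.filter fun p => s ≤ p.1).image fun p => (p.1 + 1, p.2))

/-- Spread of a set of tiles at column `s`. -/
def spreadTiles (s : ℤ) (ts : Finset (Finset (ℤ × ℤ))) : Finset (Finset (ℤ × ℤ)) :=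
  ts.image (spreadTile s)

/-- Column `c` is eligible for a tiling with upper-boundary height function `h` and
tile set `ts`: the upper boundary has an up step ending at column `c`, and its point at
column `c` is not the top corner of a one-box tile. -/
def EligibleCol (h : ℤ → ℤ) (ts : Finset (Finset (ℤ × ℤ))) (c : ℤ) : Prop :=
  h c = h (c - 1) + 1 ∧ ({(c, h c - 2)} : Finset (ℤ × ℤ)) ∉ ts

/-- `T'` is the result of the strip-grow map applied to `(T, s)`: spread `T` at `s` and
add a one-box tile on each up step of the (spread) upper boundary starting at a column
`≥ s` (i.e. strictly to the right of column `s`). -/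
def StripGrowRel {n : ℕ} (T : DyckTiling n) (s : ℤ) (T' : DyckTiling (n + 1)) : Prop :=
  (∀ x : ℤ, T'.lower.ht x = spreadHt T.lower s x) ∧
  (∀ x : ℤ, T'.upper.ht x =
    if s ≤ x ∧ spreadHt T.upper s (x + 1) = spreadHt T.upper s x + 1 then
      spreadHt T.upper s x + 2
    else spreadHt T.upper s x) ∧
  T'.tiles = spreadTiles s T.tiles ∪
    ((Finset.Icc s (n : ℤ)).filter fun x =>
        spreadHt T.upper s (x + 1) = spreadHt T.upper s x + 1).image
      (fun x => ({(x, spreadHt T.upper s x)} : Finset (ℤ × ℤ)))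

/-- `T'` is the result of the ribbon-grow map applied to `(T, s)`: spread `T` at `s`,
and if the special column `Q` of the spread tiling is strictly right of `s`, add a
ribbon of one-box tiles at all columns strictly between `s` and `Q`. -/
def RibbonGrowRel {n : ℕ} (T : DyckTiling n) (s : ℤ) (T' : DyckTiling (n + 1)) : Prop :=
  (∀ x : ℤ, T'.lower.ht x = spreadHt T.lower s x) ∧
  ∃ Q : ℤ,
    EligibleCol (spreadHt T.upper s) (spreadTiles s T.tiles) Q ∧
    (∀ c : ℤ, EligibleCol (spreadHt T.upper s) (spreadTiles s T.tiles) c → c ≤ Q) ∧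
    (∀ x : ℤ, T'.upper.ht x =
      if s < x ∧ x < Q then spreadHt T.upper s x + 2 else spreadHt T.upper s x) ∧
    T'.tiles = spreadTiles s T.tiles ∪
      (Finset.Ioo s Q).image (fun x => ({(x, spreadHt T.upper s x)} : Finset (ℤ × ℤ)))

/-- `s` is the special column of `T`: its rightmost eligible column. -/
def SpecialCol {n : ℕ} (T : DyckTiling n) (s : ℤ) : Prop :=
  EligibleCol T.upper.ht T.tiles s ∧ ∀ c : ℤ, EligibleCol T.upper.ht T.tiles c → c ≤ s

/-- In the strip-shrink map applied to `T'` with special column `s`, a one-box tile is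
removed at column `x`: `x` is right of `s` and there is a one-box tile there that is
part of an up step of the upper boundary. -/
def StripRemovedAt {n : ℕ} (T' : DyckTiling n) (s x : ℤ) : Prop :=
  s < x ∧ T'.upper.ht x = T'.upper.ht (x - 1) + 1 ∧
    ({(x, T'.upper.ht x - 2)} : Finset (ℤ × ℤ)) ∈ T'.tiles

instance {n : ℕ} (T' : DyckTiling n) (s x : ℤ) : Decidable (StripRemovedAt T' s x) := by
  unfold StripRemovedAt; infer_instance

/-- `(T, s)` is the result of the strip-shrink map applied to `T'`: `s` is the special
column of `T'`; all one-box tiles right of `s` lying on up steps of the upper boundary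
are removed; and the result is the spread of `T` at `s`. -/
def StripShrinkRel {n : ℕ} (T' : DyckTiling (n + 1)) (T : DyckTiling n) (s : ℤ) : Prop :=
  SpecialCol T' s ∧
  (∀ x : ℤ, spreadHt T.lower s x = T'.lower.ht x) ∧
  (∀ x : ℤ, spreadHt T.upper s x =
    if StripRemovedAt T' s x then T'.upper.ht x - 2 else T'.upper.ht x) ∧
  spreadTiles s T.tiles =
    T'.tiles \ (((Finset.Ioc s ((n : ℤ) + 1)).filter fun x => StripRemovedAt T' s x).image
      fun x => ({(x, T'.upper.ht x - 2)} : Finset (ℤ × ℤ)))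

/-- `(T, s)` is the result of the ribbon-shrink map applied to `T'`: `s` is the special
column of `T'`; the maximal run of topmost one-box tiles in columns `s+1, s+2, …` is
removed; and the result is the spread of `T` at `s`. -/
def RibbonShrinkRel {n : ℕ} (T' : DyckTiling (n + 1)) (T : DyckTiling n) (s : ℤ) : Prop :=
  SpecialCol T' s ∧
  ∃ r : ℤ, s < r ∧
    (∀ x : ℤ, s < x → x < r → ({(x, T'.upper.ht x - 2)} : Finset (ℤ × ℤ)) ∈ T'.tiles) ∧
    ({(r, T'.upper.ht r - 2)} : Finset (ℤ × ℤ)) ∉ T'.tiles ∧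
    (∀ x : ℤ, spreadHt T.lower s x = T'.lower.ht x) ∧
    (∀ x : ℤ, spreadHt T.upper s x =
      if s < x ∧ x < r then T'.upper.ht x - 2 else T'.upper.ht x) ∧
    spreadTiles s T.tiles =
      T'.tiles \ ((Finset.Ioo s r).image fun x => ({(x, T'.upper.ht x - 2)} : Finset (ℤ × ℤ)))

/-- `IsDTS n p T`: `T` is the Dyck tiling `DTS(p_1, …, p_n)` (indices 0-based, so the
growth column for step `i` is `p i - i`). -/
inductive IsDTS : (n : ℕ) → (Fin n → ℕ) → DyckTiling n → Prop where
  | nil (p : Fin 0 → ℕ) (T : DyckTiling 0) : IsDTS 0 p T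
  | cons (n : ℕ) (p : Fin (n + 1) → ℕ) (T : DyckTiling n) (T' : DyckTiling (n + 1)) :
      IsDTS n (fun i => p i.castSucc) T →
      StripGrowRel T ((p (Fin.last n) : ℤ) - n) T' → IsDTS (n + 1) p T'

/-- `IsDTR n p T`: `T` is the Dyck tiling `DTR(p_1, …, p_n)`. -/
inductive IsDTR : (n : ℕ) → (Fin n → ℕ) → DyckTiling n → Prop where
  | nil (p : Fin 0 → ℕ) (T : DyckTiling 0) : IsDTR 0 p T
  | cons (n : ℕ) (p : Fin (n + 1) → ℕ) (T : DyckTiling n) (T' : DyckTiling (n + 1)) :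
      IsDTR n (fun i => p i.castSucc) T →
      RibbonGrowRel T ((p (Fin.last n) : ℤ) - n) T' → IsDTR (n + 1) p T'

/-- `T = DTS(λ, σ)`. -/
def IsDTSof {n : ℕ} (lam : DyckPath n) (σ : Equiv.Perm (Fin n)) (T : DyckTiling n) : Prop :=
  ∃ C : ChordLabeling lam, IsStandardization C.l σ ∧ IsDTS n (seqOf C) T

/-- `T = DTR(λ, σ)`. -/
def IsDTRof {n : ℕ} (lam : DyckPath n) (σ : Equiv.Perm (Fin n)) (T : DyckTiling n) : Prop :=
  ∃ C : ChordLabeling lam, IsStandardization C.l σ ∧ IsDTR n (seqOf C) T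

/-- Increment `a` if it exceeds `p`. -/
def bump (p a : ℕ) : ℕ := if p < a then a + 1 else a

/-- The perfect matching `match(p_1, …, p_n)` of `{1, …, 2n}`. -/
def matchSeq : (n : ℕ) → (Fin n → ℕ) → Finset (ℕ × ℕ)
  | 0, _ => ∅
  | n + 1, p =>
    ((matchSeq n fun i => p i.castSucc).image fun q =>
      (bump (p (Fin.last n)) q.1, bump (p (Fin.last n)) q.2)) ∪
      {(p (Fin.last n) + 1, 2 * (n + 1))}

/-- The number of nestings of a matching: pairs `(a,b)`, `(c,d)` with `c < a < b < d`. -/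
def nestings (M : Finset (ℕ × ℕ)) : ℕ :=
  ((M ×ˢ M).filter fun q => q.2.1 < q.1.1 ∧ q.1.1 < q.1.2 ∧ q.1.2 < q.2.2).card

/-- `w` is the min-word of `M`: the list of the smaller elements of the pairs of `M`,
sorted by the larger elements. -/
def IsMinWord (n : ℕ) (M : Finset (ℕ × ℕ)) (w : Fin n → ℕ) : Prop :=
  ∃ b : Fin n → ℕ, StrictMono b ∧ (∀ i, w i < b i) ∧
    M = Finset.univ.image fun i => (w i, b i)

/-- The number of tiles of `T` containing boxes over both endpoint columns of the
chord with endpoints at step positions `p < q`. -/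
def chordTileCount {n : ℕ} (T : DyckTiling n) (p q : ℕ) : ℕ :=
  (T.tiles.filter fun t =>
    (∃ c ∈ t, (c : ℤ × ℤ).1 = (p : ℤ) + 1 - n) ∧ (∃ c ∈ t, (c : ℤ × ℤ).1 = (q : ℤ) - n)).card

/-- A Dyck tableau of order `n` over the zigzag path `Z` of order `n+1`: a skew shape
`Z/μ` with `n` dots, one in each column of the skew shape through a valley of `Z`. -/
structure DyckTableau (n : ℕ) (Z : DyckPath (n + 1)) where
  upper : DyckPath (n + 1)
  below : ∀ x : ℤ, Z.ht x ≤ upper.ht x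
  dots : Finset (ℤ × ℤ)
  sub : dots ⊆ skewCells Z upper
  card_dots : dots.card = n
  valley : ∀ x : ℤ, Z.ht (x - 1) = Z.ht x + 1 → Z.ht (x + 1) = Z.ht x + 1 →
    (dots.filter fun c => c.1 = x).card = 1

/-- The `q`-integer `[m]_q = 1 + q + ⋯ + q^(m-1)` as a polynomial. -/
def qint (m : ℕ) : Polynomial ℤ := ∑ i ∈ Finset.range m, Polynomial.X ^ i

/-- The `q`-factorial `[n]_q!`. -/
def qfact (n : ℕ) : Polynomial ℤ := ∏ i ∈ Finset.range n, qint (i + 1)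

/-!
Record a cover-inclusive tiling by the number of boxes in each column and the number of tiles that
cross each step of the lower path. The two steps of a chord are crossed by equally many tiles, and
what happens above a chord only depends on the columns relative to that number. So the generating
function of the admissible codes is computed by operators on sequences: concatenating words
composes operators, and enclosing a word by a chord turns its operator `F` into `wrapOp z F`. All
these operators share the eigenvectors `eigenSeq z m`, and the eigenvalue of a word is `z - 1` to
the number of its chords times the number of strict order-preserving maps from its chord poset to a
chain with `m` elements. A banded operator is determined by these eigenvalues if `z ≠ 0, 1`, so the
generating function only depends on the chord poset.
-/

/-! ### Operators on sequences and their common eigenvectors -/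

section SequenceOperators

section CommSemiring

variable {K : Type*} [CommSemiring K]

/-- The shift `f ↦ f (· + t)` on sequences. -/
def shiftBy (t : ℕ) : (ℕ → K) →ₗ[K] (ℕ → K) := LinearMap.funLeft K K (· + t)

/-- The operator `f ↦ (j ↦ f j + z f (j + 1))`: the effect of a down step on a generating function
in which the sequence variable is the number of boxes in the current column. -/
def downOp (z : K) : (ℕ → K) →ₗ[K] (ℕ → K) := LinearMap.id + z • shiftBy 1

/-- The operator `f ↦ (i ↦ f i + f (i - 1))`, where `f (-1)` is read as `0`: the effect of an
up step on a generating function. -/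
def upOp : (ℕ → K) →ₗ[K] (ℕ → K) where
  toFun f
    | 0 => f 0
    | i + 1 => f (i + 1) + f i
  map_add' f g := by ext (_ | i) <;> simp [add_add_add_comm]
  map_smul' a f := by ext (_ | i) <;> simp [mul_add]

/-- The effect on generating functions of a chord `U A D` whose inside `A` acts by `F`. The
summation variable counts the tiles crossing the chord in excess of those crossing the next chord
outside it. -/
def wrapOp (z : K) (F : (ℕ → K) →ₗ[K] (ℕ → K)) : (ℕ → K) →ₗ[K] (ℕ → K) :=
  LinearMap.pi fun i => ∑ t ∈ range (i + 1),
    LinearMap.proj (i - t) ∘ₗ upOp ∘ₗ F ∘ₗ downOp z ∘ₗ shiftBy t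

lemma shiftBy_apply (t : ℕ) (f : ℕ → K) (j : ℕ) : shiftBy t f j = f (j + t) := rfl

lemma shiftBy_zero (f : ℕ → K) : shiftBy 0 f = f := rfl

lemma downOp_apply (z : K) (f : ℕ → K) (j : ℕ) : downOp z f j = f j + z * f (j + 1) := rfl

lemma upOp_zero (f : ℕ → K) : upOp f 0 = f 0 := rfl

lemma upOp_succ (f : ℕ → K) (i : ℕ) : upOp f (i + 1) = f (i + 1) + f i := rfl

lemma wrapOp_apply (z : K) (F : (ℕ → K) →ₗ[K] (ℕ → K)) (f : ℕ → K) (i : ℕ) :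
    wrapOp z F f i = ∑ t ∈ range (i + 1), upOp (F (downOp z (shiftBy t f))) (i - t) := by
  simp [wrapOp]

lemma wrapOp_apply_zero (z : K) (F : (ℕ → K) →ₗ[K] (ℕ → K)) (f : ℕ → K) :
    wrapOp z F f 0 = F (downOp z f) 0 := by
  simp [wrapOp_apply, upOp_zero, shiftBy_zero]

lemma wrapOp_apply_succ (z : K) (F : (ℕ → K) →ₗ[K] (ℕ → K)) (f : ℕ → K) (i : ℕ) :
    wrapOp z F f (i + 1) =
      wrapOp z F (shiftBy 1 f) i + (F (downOp z f) (i + 1) + F (downOp z f) i) := by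
  rw [wrapOp_apply, sum_range_succ', wrapOp_apply, shiftBy_zero, Nat.sub_zero, upOp_succ]
  refine congrArg (· + _) (sum_congr rfl fun t _ => ?_)
  rw [Nat.add_sub_add_right]
  rfl

/-- `F` has bandwidth `d`: the value of `F f` at `i` only depends on `f` up to `i + d`. -/
def HasBand (d : ℕ) (F : (ℕ → K) →ₗ[K] (ℕ → K)) : Prop :=
  ∀ i f g, (∀ j ≤ i + d, f j = g j) → F f i = F g i

lemma hasBand_id : HasBand 0 (LinearMap.id : (ℕ → K) →ₗ[K] (ℕ → K)) :=
  fun i _ _ h => h i le_rfl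

lemma HasBand.comp {d e : ℕ} {F G : (ℕ → K) →ₗ[K] (ℕ → K)} (hF : HasBand d F)
    (hG : HasBand e G) : HasBand (d + e) (F ∘ₗ G) :=
  fun i f g h => hF i _ _ fun j hj => hG j _ _ fun k hk => h k (by omega)

lemma hasBand_upOp : HasBand 0 (upOp : (ℕ → K) →ₗ[K] (ℕ → K)) := by
  rintro (_ | i) f g h
  · exact h 0 le_rfl
  · rw [upOp_succ, upOp_succ, h _ le_rfl, h i (Nat.le_succ i)]

lemma hasBand_downOp (z : K) : HasBand 1 (downOp z) := fun i f g h => by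
  rw [downOp_apply, downOp_apply, h i (Nat.le_succ i), h (i + 1) le_rfl]

lemma hasBand_shiftBy (t : ℕ) : HasBand t (shiftBy t : (ℕ → K) →ₗ[K] (ℕ → K)) :=
  fun i _ _ h => h (i + t) le_rfl

lemma HasBand.wrapOp (z : K) {d : ℕ} {F : (ℕ → K) →ₗ[K] (ℕ → K)} (hF : HasBand d F) :
    HasBand (d + 1) (wrapOp z F) := by
  intro i f g h
  rw [wrapOp_apply, wrapOp_apply]
  refine sum_congr rfl fun t ht => ?_
  have hti : t ≤ i := mem_range_succ_iff.mp ht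
  have hband := hasBand_upOp.comp (hF.comp ((hasBand_downOp z).comp (hasBand_shiftBy t)))
  exact hband (i - t) f g fun j hj => h j (by omega)

end CommSemiring

section Field

variable {K : Type*} [Field K]

/-- `eigenSeq z m` is the coefficient sequence of the power series
`z ^ m (1 + x) ^ m / (x + z) ^ (m + 1)`. These are the common eigenvectors of all the operators
built from `wrapOp z`. -/
def eigenSeq (z : K) : ℕ → ℕ → K
  | _, 0 => z⁻¹
  | 0, i + 1 => -eigenSeq z 0 i / z
  | m + 1, i + 1 => eigenSeq z m (i + 1) + eigenSeq z m i - eigenSeq z (m + 1) i / z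

lemma eigenSeq_apply_zero (z : K) (m : ℕ) : eigenSeq z m 0 = z⁻¹ := by
  cases m <;> rw [eigenSeq]

lemma eigenSeq_zero_succ (z : K) (i : ℕ) : eigenSeq z 0 (i + 1) = -eigenSeq z 0 i / z := by
  rw [eigenSeq]

lemma eigenSeq_succ_succ (z : K) (m i : ℕ) :
    eigenSeq z (m + 1) (i + 1) =
      eigenSeq z m (i + 1) + eigenSeq z m i - eigenSeq z (m + 1) i / z := by
  rw [eigenSeq]

lemma downOp_eigenSeq {z : K} (hz : z ≠ 0) (m : ℕ) :
    downOp z (eigenSeq z m) = (z - 1) • ∑ k ∈ range m, eigenSeq z k := by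
  induction m with
  | zero =>
    ext i
    simp only [downOp_apply, eigenSeq_zero_succ, range_zero, sum_empty, smul_zero, Pi.zero_apply]
    field_simp
    ring
  | succ m ih =>
    rw [sum_range_succ, smul_add, ← ih]
    ext i
    simp only [downOp_apply, Pi.add_apply, Pi.smul_apply, smul_eq_mul, eigenSeq_succ_succ]
    field_simp
    ring

lemma shiftBy_one_eigenSeq {z : K} (hz : z ≠ 0) (m : ℕ) :
    shiftBy 1 (eigenSeq z m) = z⁻¹ • ((z - 1) • ∑ k ∈ range m, eigenSeq z k - eigenSeq z m) := by
  rw [← downOp_eigenSeq hz, eq_inv_smul_iff₀ hz, downOp, LinearMap.add_apply, LinearMap.id_apply,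
    add_sub_cancel_left, LinearMap.smul_apply]

lemma map_downOp_eigenSeq {z : K} (hz : z ≠ 0) {F : (ℕ → K) →ₗ[K] (ℕ → K)} {w : ℕ → K}
    (hF : ∀ m, F (eigenSeq z m) = w m • eigenSeq z m) (m : ℕ) :
    F (downOp z (eigenSeq z m)) = (z - 1) • ∑ k ∈ range m, w k • eigenSeq z k := by
  simp only [downOp_eigenSeq hz, map_smul, map_sum, hF]

lemma wrapOp_eigenSeq {z : K} (hz : z ≠ 0) {F : (ℕ → K) →ₗ[K] (ℕ → K)} {w : ℕ → K}
    (hF : ∀ m, F (eigenSeq z m) = w m • eigenSeq z m) (m : ℕ) :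
    wrapOp z F (eigenSeq z m) = ((z - 1) * ∑ k ∈ range m, w k) • eigenSeq z m := by
  ext i
  induction i generalizing m with
  | zero =>
    rw [wrapOp_apply_zero, map_downOp_eigenSeq hz hF]
    simp [eigenSeq_apply_zero, sum_mul, mul_assoc]
  | succ i ih =>
    have hrec : ∀ m, wrapOp z F (eigenSeq z m) (i + 1) =
        z⁻¹ * ((z - 1) * ∑ k ∈ range m, ((z - 1) * ∑ k ∈ range k, w k) * eigenSeq z k i -
          ((z - 1) * ∑ k ∈ range m, w k) * eigenSeq z m i) +
        (z - 1) * ∑ k ∈ range m, w k * (eigenSeq z k (i + 1) + eigenSeq z k i) := by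
      intro m
      rw [wrapOp_apply_succ, shiftBy_one_eigenSeq hz, map_downOp_eigenSeq hz hF]
      simp only [map_smul, map_sub, map_sum, Pi.smul_apply, Pi.sub_apply, Finset.sum_apply,
        smul_eq_mul, ih, mul_add, sum_add_distrib]
    rw [hrec]
    clear hrec ih hF
    induction m with
    | zero => simp
    | succ m ih =>
      simp only [Pi.smul_apply, smul_eq_mul] at ih ⊢
      rw [sum_range_succ, sum_range_succ, sum_range_succ, eigenSeq_succ_succ]
      linear_combination ih +
        ((z - 1) * (∑ k ∈ range m, w k) * eigenSeq z m i) * mul_inv_cancel₀ hz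

open fwdDiff

lemma fwdDiff_iter_succ_apply {M G : Type*} [AddCommMonoid M] [AddCommGroup G] (h : M)
    (f : M → G) (k : ℕ) (y : M) :
    (Δ_[h])^[k + 1] f y = (Δ_[h])^[k] f (y + h) - (Δ_[h])^[k] f y := by
  rw [Function.iterate_succ_apply', fwdDiff]

lemma fwdDiff_eigenSeq_apply_succ (z : K) (k m i : ℕ) :
    (Δ_[1])^[k + 1] (eigenSeq z) m (i + 1) =
      (Δ_[1])^[k] (eigenSeq z) m i - (Δ_[1])^[k] (eigenSeq z) (m + 1) i / z := by
  induction k generalizing m with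
  | zero =>
    simp only [fwdDiff_iter_succ_apply, Function.iterate_zero, id_eq, Pi.sub_apply,
      eigenSeq_succ_succ]
    ring
  | succ k ih =>
    rw [fwdDiff_iter_succ_apply, Pi.sub_apply, ih, ih, fwdDiff_iter_succ_apply,
      fwdDiff_iter_succ_apply, Pi.sub_apply, Pi.sub_apply]
    ring

lemma fwdDiff_eigenSeq_apply_zero (z : K) (k m : ℕ) :
    (Δ_[1])^[k + 1] (eigenSeq z) m 0 = 0 := by
  induction k generalizing m with
  | zero => simp [fwdDiff, eigenSeq_apply_zero]
  | succ k ih => rw [fwdDiff_iter_succ_apply, Pi.sub_apply, ih, ih, sub_zero]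

lemma fwdDiff_eigenSeq_eq_zero (z : K) {k i : ℕ} (hi : i < k) (m : ℕ) :
    (Δ_[1])^[k] (eigenSeq z) m i = 0 := by
  induction k generalizing m i with
  | zero => omega
  | succ k ih =>
    cases i with
    | zero => exact fwdDiff_eigenSeq_apply_zero z k m
    | succ i => rw [fwdDiff_eigenSeq_apply_succ, ih (by omega), ih (by omega), zero_div, sub_zero]

lemma fwdDiff_eigenSeq_self (z : K) (k m : ℕ) :
    (Δ_[1])^[k] (eigenSeq z) m k = (1 - z⁻¹) ^ k * z⁻¹ := by
  induction k generalizing m with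
  | zero => simp [eigenSeq_apply_zero]
  | succ k ih => rw [fwdDiff_eigenSeq_apply_succ, ih, ih]; ring

lemma fwdDiff_eigenSeq_mem_span (z : K) (k m : ℕ) :
    (Δ_[1])^[k] (eigenSeq z) m ∈ Submodule.span K (Set.range (eigenSeq z)) := by
  rw [fwdDiff_iter_eq_sum_shift]
  exact Submodule.sum_mem _ fun j _ => zsmul_mem (Submodule.subset_span (Set.mem_range_self _)) _

/- The `k`-th iterated difference in `m` vanishes below position `k` but not at `k`, so a
triangular elimination matches any finite initial segment. -/
lemma exists_mem_span_eigenSeq {z : K} (hz : z ≠ 0) (hz1 : z ≠ 1) (f : ℕ → K) (d : ℕ) :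
    ∃ g ∈ Submodule.span K (Set.range (eigenSeq z)), ∀ i < d, g i = f i := by
  induction d with
  | zero => exact ⟨0, Submodule.zero_mem _, fun i hi => by omega⟩
  | succ d ih =>
    obtain ⟨g, hg, hgf⟩ := ih
    let u := (Δ_[1])^[d] (eigenSeq z) 0
    have hu : ∀ i < d, u i = 0 := fun i hi => fwdDiff_eigenSeq_eq_zero z hi 0
    have hud : u d ≠ 0 := by
      rw [show u d = _ from fwdDiff_eigenSeq_self z d 0]
      exact mul_ne_zero (pow_ne_zero _ (sub_ne_zero.mpr (inv_ne_one.mpr hz1).symm))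
        (inv_ne_zero hz)
    refine ⟨g + ((f d - g d) / u d) • u,
      Submodule.add_mem _ hg (Submodule.smul_mem _ _ (fwdDiff_eigenSeq_mem_span z d 0)), ?_⟩
    intro i hi
    simp only [Pi.add_apply, Pi.smul_apply, smul_eq_mul]
    rcases Nat.lt_succ_iff_lt_or_eq.mp hi with hid | rfl
    · rw [hu i hid, mul_zero, add_zero, hgf i hid]
    · rw [div_mul_cancel₀ _ hud, add_sub_cancel]

lemma HasBand.ext_eigenSeq {z : K} (hz : z ≠ 0) (hz1 : z ≠ 1) {d e : ℕ}
    {F G : (ℕ → K) →ₗ[K] (ℕ → K)} (hF : HasBand d F) (hG : HasBand e G)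
    (h : ∀ m, F (eigenSeq z m) = G (eigenSeq z m)) : F = G := by
  ext1 f
  ext i
  obtain ⟨g, hg, hgf⟩ := exists_mem_span_eigenSeq hz hz1 f (i + d + e + 1)
  have hFG : F g = G g := LinearMap.eqOn_span (by rintro _ ⟨m, rfl⟩; exact h m) hg
  rw [← hF i g f fun j hj => hgf j (by omega), hFG, hG i g f fun j hj => hgf j (by omega)]

end Field

end SequenceOperators

/-! ### Counting strict order-preserving maps -/

section StrictMaps

variable {α : Type*} {R : α → α → Prop} {S : Finset α} {m : ℕ} {g : α → ℕ}

/-- `g` is a strict order-preserving map from `S`, ordered by `R`, to `{0, …, m - 1}`. -/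
def IsStrictMapOn (R : α → α → Prop) (S : Finset α) (m : ℕ) (g : α → ℕ) : Prop :=
  (∀ i ∈ S, g i < m) ∧ ∀ i ∈ S, ∀ j ∈ S, R i j → g i < g j

lemma IsStrictMapOn.congr {g' : α → ℕ} (hg : IsStrictMapOn R S m g) (h : ∀ i ∈ S, g i = g' i) :
    IsStrictMapOn R S m g' :=
  ⟨fun i hi => h i hi ▸ hg.1 i hi, fun i hi j hj hij => h i hi ▸ h j hj ▸ hg.2 i hi j hj hij⟩

variable [DecidableEq α]

lemma isStrictMapOn_insert {a : α} (htop : ∀ i ∈ S, R i a) (hmax : ∀ i ∈ S, ¬ R a i)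
    (hirrefl : ¬ R a a) :
    IsStrictMapOn R (insert a S) m g ↔ g a < m ∧ IsStrictMapOn R S (g a) g := by
  simp only [IsStrictMapOn, forall_mem_insert]
  constructor
  · rintro ⟨⟨ha, -⟩, -, hlt⟩
    exact ⟨ha, fun i hi => (hlt i hi).1 (htop i hi), fun i hi => (hlt i hi).2⟩
  · rintro ⟨ha, hlt, hS⟩
    exact ⟨⟨ha, fun i hi => (hlt i hi).trans ha⟩, ⟨fun h => absurd h hirrefl,
      fun i hi h => absurd h (hmax i hi)⟩, fun i hi => ⟨fun _ => hlt i hi, hS i hi⟩⟩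

lemma isStrictMapOn_union {A B : Finset α} (hAB : ∀ i ∈ A, ∀ j ∈ B, ¬ R i j)
    (hBA : ∀ i ∈ A, ∀ j ∈ B, ¬ R j i) :
    IsStrictMapOn R (A ∪ B) m g ↔ IsStrictMapOn R A m g ∧ IsStrictMapOn R B m g := by
  simp only [IsStrictMapOn, mem_union, or_imp, forall_and]
  grind

variable [Fintype α]

open Classical in
/-- The strict order-preserving maps from `S` to `{0, …, m - 1}`, extended by `0` outside `S` so
that they form a finite set. -/
def strictMaps (R : α → α → Prop) (S : Finset α) (m : ℕ) : Finset (α → ℕ) :=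
  (Fintype.piFinset fun i => if i ∈ S then range m else {0}).filter (IsStrictMapOn R S m)

lemma mem_strictMaps :
    g ∈ strictMaps R S m ↔ IsStrictMapOn R S m g ∧ ∀ i ∉ S, g i = 0 := by
  classical
  rw [strictMaps, mem_filter, Fintype.mem_piFinset, and_comm]
  refine and_congr_right fun hg => forall_congr' fun i => ?_
  by_cases hi : i ∈ S <;> simp [hi, hg.1]

lemma card_strictMaps_empty (R : α → α → Prop) (m : ℕ) : #(strictMaps R ∅ m) = 1 := by
  rw [card_eq_one]
  refine ⟨0, ?_⟩
  ext g
  simp [mem_strictMaps, IsStrictMapOn, funext_iff]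

lemma card_filter_strictMaps_insert {a : α} (ha : a ∉ S) (htop : ∀ i ∈ S, R i a)
    (hmax : ∀ i ∈ S, ¬ R a i) (hirrefl : ¬ R a a) {k m : ℕ} (hk : k < m) :
    #{g ∈ strictMaps R (insert a S) m | g a = k} = #(strictMaps R S k) := by
  have hinsert (g : α → ℕ) := isStrictMapOn_insert (m := m) (g := g) htop hmax hirrefl
  have hne : ∀ i ∈ S, i ≠ a := fun i hi => ne_of_mem_of_not_mem hi ha
  refine card_nbij' (fun g => Function.update g a 0) (fun g => Function.update g a k) ?_ ?_ ?_ ?_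
  · intro g hg
    obtain ⟨hmem, rfl⟩ := mem_filter.mp hg
    obtain ⟨hstrict, hzero⟩ := mem_strictMaps.mp hmem
    dsimp only
    refine mem_strictMaps.mpr ⟨((hinsert g).mp hstrict).2.congr fun i hi => ?_, fun i hi => ?_⟩
    · rw [Function.update_of_ne (hne i hi)]
    · rcases eq_or_ne i a with rfl | hia
      · rw [Function.update_self]
      · rw [Function.update_of_ne hia, hzero i (by simp [hia, hi])]
  · intro g hg
    obtain ⟨hstrict, hzero⟩ := mem_strictMaps.mp hg
    dsimp only
    refine mem_filter.mpr ⟨mem_strictMaps.mpr ⟨(hinsert _).mpr ?_, fun i hi => ?_⟩,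
      Function.update_self ..⟩
    · rw [Function.update_self]
      exact ⟨hk, hstrict.congr fun i hi => by rw [Function.update_of_ne (hne i hi)]⟩
    · rw [mem_insert, not_or] at hi
      rw [Function.update_of_ne hi.1, hzero i hi.2]
  · intro g hg
    obtain ⟨-, rfl⟩ := mem_filter.mp hg
    simp
  · intro g hg
    simp [← (mem_strictMaps.mp hg).2 a ha]

lemma card_strictMaps_insert {a : α} (ha : a ∉ S) (htop : ∀ i ∈ S, R i a)
    (hmax : ∀ i ∈ S, ¬ R a i) (hirrefl : ¬ R a a) (m : ℕ) :
    #(strictMaps R (insert a S) m) = ∑ k ∈ range m, #(strictMaps R S k) := by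
  have hmaps : Set.MapsTo (fun g : α → ℕ => g a) (strictMaps R (insert a S) m) (range m) :=
    fun g hg => mem_coe.mpr (mem_range.mpr ((mem_strictMaps.mp hg).1.1 a (mem_insert_self a S)))
  rw [card_eq_sum_card_fiberwise hmaps]
  exact sum_congr rfl fun k hk =>
    card_filter_strictMaps_insert ha htop hmax hirrefl (mem_range.mp hk)

lemma card_strictMaps_union {A B : Finset α} (hdisj : Disjoint A B)
    (hAB : ∀ i ∈ A, ∀ j ∈ B, ¬ R i j) (hBA : ∀ i ∈ A, ∀ j ∈ B, ¬ R j i) (m : ℕ) :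
    #(strictMaps R (A ∪ B) m) = #(strictMaps R A m) * #(strictMaps R B m) := by
  have hunion (g : α → ℕ) := isStrictMapOn_union (m := m) (g := g) hAB hBA
  have hB : ∀ i ∈ B, i ∉ A := fun i hiB hiA => disjoint_left.mp hdisj hiA hiB
  rw [← card_product]
  refine card_nbij' (fun g => (A.piecewise g 0, B.piecewise g 0)) (fun p => A.piecewise p.1 p.2)
    ?_ ?_ ?_ ?_
  · intro g hg
    obtain ⟨hgA, hgB⟩ := (hunion g).mp (mem_strictMaps.mp hg).1
    exact mem_product.mpr
      ⟨mem_strictMaps.mpr ⟨hgA.congr (by simp +contextual), by simp +contextual⟩,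
      mem_strictMaps.mpr ⟨hgB.congr (by simp +contextual), by simp +contextual⟩⟩
  · intro p hp
    obtain ⟨hpA, hpB⟩ := mem_product.mp hp
    obtain ⟨hstrictA, -⟩ := mem_strictMaps.mp hpA
    obtain ⟨hstrictB, hzeroB⟩ := mem_strictMaps.mp hpB
    dsimp only
    refine mem_strictMaps.mpr ⟨(hunion _).mpr ⟨hstrictA.congr (by simp +contextual),
      hstrictB.congr fun i hi => (piecewise_eq_of_notMem _ _ _ (hB i hi)).symm⟩, fun i hi => ?_⟩
    rw [mem_union, not_or] at hi
    rw [piecewise_eq_of_notMem _ _ _ hi.1, hzeroB i hi.2]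
  · intro g hg
    obtain ⟨-, hzero⟩ := mem_strictMaps.mp hg
    ext i
    by_cases hiA : i ∈ A <;> by_cases hiB : i ∈ B <;> simp [hiA, hiB, hzero]
  · intro p hp
    obtain ⟨hpA, hpB⟩ := mem_product.mp hp
    have hzeroA := (mem_strictMaps.mp hpA).2
    have hzeroB := (mem_strictMaps.mp hpB).2
    refine Prod.ext (funext fun i => ?_) (funext fun i => ?_)
    · by_cases hi : i ∈ A <;> simp [hi, hzeroA]
    · by_cases hi : i ∈ B <;> simp [hi, hB, hzeroB]

end StrictMaps

/-! ### Codes and their transfer operators -/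

section Codes

/-- The admissible pairs `(t, d)` at a step of the lower path, leaving a column with `c` boxes:
`t` tiles cross the step and the next column has `d` boxes. The stack `σ` lists the numbers of tiles
crossing the up steps of the open chords, innermost chord first. -/
def stepChoices (up : Bool) (σ : List ℕ) (c : ℕ) : Finset (ℕ × ℕ) :=
  if up then {p ∈ Icc (σ.headD 0) c ×ˢ Icc (c - 1) c | p.1 ≤ p.2}
  else {p ∈ {σ.headD 0} ×ˢ Icc c (c + 1) | p.1 ≤ c}

/-- The stack of the open chords after a step crossed by `t` tiles. -/
def nextStack (up : Bool) (σ : List ℕ) (t : ℕ) : List ℕ := if up then t :: σ else σ.tail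

/-- The codes of the tilings over a word of steps (`true` for up), started in a column with `c`
boxes with stack `σ`: the successive choices of pairs, ending in a column without boxes. -/
def codes : List Bool → List ℕ → ℕ → Finset (List (ℕ × ℕ))
  | [], _, c => if c = 0 then {[]} else ∅
  | b :: L, σ, c => (stepChoices b σ c).biUnion fun p =>
      (codes L (nextStack b σ p.1) p.2).image (List.cons p)

/-- The discrepancy of a tiling, read off from its code: a down step of the lower path lies below
an up step of the upper path exactly when the number of boxes increases. -/
def codeDis : List Bool → ℕ → List (ℕ × ℕ) → ℕ
  | b :: L, c, p :: d => (if b = false ∧ p.2 = c + 1 then 1 else 0) + codeDis L p.2 d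
  | _, _, _ => 0

variable {K : Type*} [CommSemiring K]

/-- The generating function of codes by discrepancy. -/
def codeSum (z : K) (L : List Bool) (σ : List ℕ) (c : ℕ) : K :=
  ∑ d ∈ codes L σ c, z ^ codeDis L c d

lemma map_codeSum {K' : Type*} [CommSemiring K'] (f : K →+* K') (z : K) (L : List Bool)
    (σ : List ℕ) (c : ℕ) : f (codeSum z L σ c) = codeSum (f z) L σ c := by
  simp only [codeSum, map_sum, map_pow]

lemma codeSum_cons (z : K) (b : Bool) (L : List Bool) (σ : List ℕ) (c : ℕ) :
    codeSum z (b :: L) σ c = ∑ p ∈ stepChoices b σ c,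
      (if b = false ∧ p.2 = c + 1 then z else 1) * codeSum z L (nextStack b σ p.1) p.2 := by
  have hdisj : (stepChoices b σ c : Set (ℕ × ℕ)).PairwiseDisjoint fun p =>
      (codes L (nextStack b σ p.1) p.2).image (List.cons p) := by
    intro p _ q _ hpq
    simp only [Function.onFun, disjoint_left, mem_image]
    rintro _ ⟨d, -, rfl⟩ ⟨d', -, hd'⟩
    exact hpq (List.cons.inj hd').1.symm
  rw [codeSum, codes, sum_biUnion hdisj]
  refine sum_congr rfl fun p _ => ?_
  rw [sum_image fun _ _ _ _ hd => (List.cons.inj hd).2, codeSum, mul_sum]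
  refine sum_congr rfl fun d _ => ?_
  rw [codeDis, pow_add]
  split_ifs <;> simp

lemma shiftBy_codeSum_false_cons (z : K) (M : List Bool) (t : ℕ) (σ : List ℕ) :
    shiftBy t (codeSum z (false :: M) (t :: σ)) = downOp z (shiftBy t (codeSum z M σ)) := by
  ext j
  have hchoices : stepChoices false (t :: σ) (j + t) = {(t, j + t), (t, j + t + 1)} := by
    ext ⟨s, d⟩
    simp only [stepChoices, Bool.false_eq_true, if_false, mem_filter, mem_product, mem_singleton,
      mem_Icc, mem_insert, Prod.mk.injEq, List.headD_cons]
    omega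
  rw [shiftBy_apply, codeSum_cons, hchoices, sum_pair (by simp)]
  simp [nextStack, downOp_apply, shiftBy_apply, Nat.add_right_comm]

lemma codeSum_true_cons_apply_add (z : K) (L : List Bool) (σ : List ℕ) (i : ℕ) :
    codeSum z (true :: L) σ (i + σ.headD 0) = ∑ t ∈ range (i + 1),
      upOp (shiftBy (σ.headD 0 + t) (codeSum z L ((σ.headD 0 + t) :: σ))) (i - t) := by
  set h := σ.headD 0
  rw [codeSum_cons, stepChoices, if_pos rfl, sum_filter, sum_product]
  change ∑ t ∈ Icc h (i + h), _ = _
  have hIcc : Icc h (i + h) = Ico h (i + h + 1) := by ext t; simp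
  rw [hIcc, sum_Ico_eq_sum_range, show i + h + 1 - h = i + 1 by omega]
  refine sum_congr rfl fun t ht => ?_
  obtain ⟨k, rfl⟩ := Nat.exists_eq_add_of_le' (mem_range_succ_iff.mp ht)
  simp only [nextStack, if_true, Bool.true_eq_false, false_and, if_false, one_mul,
    Nat.add_sub_cancel]
  rcases k with _ | k
  · rw [← sum_filter, show {d ∈ Icc (0 + t + h - 1) (0 + t + h) | h + t ≤ d} = {h + t} by
      ext d; simp only [mem_filter, mem_Icc, mem_singleton]; omega]
    simp [upOp_zero, shiftBy_apply]
  · rw [show Icc (k + 1 + t + h - 1) (k + 1 + t + h) = {k + 1 + (h + t), k + (h + t)} by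
      ext d; simp only [mem_Icc, mem_insert, mem_singleton]; omega, sum_pair (by omega),
      if_pos (by omega), if_pos (by omega)]
    simp [upOp_succ, shiftBy_apply]

/-- `F` is the transfer operator from the word `L` to its suffix `M`: it computes the generating
functions of the codes over `L` from those over `M`, for every stack. Columns are counted relative
to the number of tiles crossing the innermost open chord, which makes `F` independent of the
stack. -/
def IsTransfer (z : K) (L M : List Bool) (F : (ℕ → K) →ₗ[K] (ℕ → K)) : Prop :=
  ∀ σ : List ℕ, shiftBy (σ.headD 0) (codeSum z L σ) = F (shiftBy (σ.headD 0) (codeSum z M σ))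

lemma isTransfer_id (z : K) (L : List Bool) : IsTransfer z L L LinearMap.id := fun _ => rfl

lemma IsTransfer.comp {z : K} {L M N : List Bool} {F G : (ℕ → K) →ₗ[K] (ℕ → K)}
    (hF : IsTransfer z L M F) (hG : IsTransfer z M N G) : IsTransfer z L N (F ∘ₗ G) := fun σ => by
  rw [hF, hG, LinearMap.comp_apply]

lemma IsTransfer.wrapOp {z : K} {L M : List Bool} {F : (ℕ → K) →ₗ[K] (ℕ → K)}
    (hF : IsTransfer z L (false :: M) F) : IsTransfer z (true :: L) M (wrapOp z F) := by
  intro σ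
  ext i
  rw [shiftBy_apply, codeSum_true_cons_apply_add, wrapOp_apply]
  refine sum_congr rfl fun t _ => ?_
  have hinner := hF ((σ.headD 0 + t) :: σ)
  rw [List.headD_cons, shiftBy_codeSum_false_cons] at hinner
  have hshift : shiftBy (σ.headD 0 + t) (codeSum z M σ) =
      shiftBy t (shiftBy (σ.headD 0) (codeSum z M σ)) := by
    ext j
    simp only [shiftBy_apply, Nat.add_assoc, Nat.add_comm t]
  rw [hinner, hshift]

end Codes

/-! ### Heights of Dyck paths -/

namespace DyckPath

variable {n : ℕ} (P : DyckPath n)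

/-- The steps of a Dyck path, indexed by natural numbers; the value is `false` beyond the last
step. -/
def isUp (s : ℕ) : Bool := if h : s < 2 * n then P.step ⟨s, h⟩ else false

lemma isUp_eq {s : ℕ} (hs : s < 2 * n) : P.isUp s = P.step ⟨s, hs⟩ := dif_pos hs

lemma pt_eq (k : ℕ) : P.pt k =
    (#{i : Fin (2 * n) | (i : ℕ) < k ∧ P.step i = true} : ℤ) -
      #{i : Fin (2 * n) | (i : ℕ) < k ∧ P.step i = false} := by
  simp [pt, ht]

lemma pt_eq_sum (k : ℕ) :
    P.pt k = ∑ i ∈ {i : Fin (2 * n) | (i : ℕ) < k},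
      if P.step i = true then (1 : ℤ) else -1 := by
  simp [pt_eq, sum_ite, filter_filter, sub_eq_add_neg]

lemma pt_zero : P.pt 0 = 0 := by simp [pt_eq]

lemma pt_nonneg {k : ℕ} (hk : k ≤ 2 * n) : 0 ≤ P.pt k := by
  rw [pt_eq, sub_nonneg]
  exact_mod_cast P.nonneg k hk

lemma pt_succ {s : ℕ} (hs : s < 2 * n) :
    P.pt (s + 1) = P.pt s + if P.isUp s = true then 1 else -1 := by
  have hinsert : univ.filter (fun i : Fin (2 * n) => (i : ℕ) < s + 1) =
      insert ⟨s, hs⟩ (univ.filter fun i : Fin (2 * n) => (i : ℕ) < s) := by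
    ext i
    simp only [mem_filter, mem_univ, true_and, mem_insert, Fin.ext_iff]
    omega
  rw [pt_eq_sum, hinsert, sum_insert (by simp), ← pt_eq_sum, isUp_eq P hs, add_comm]

lemma pt_succ_of_up {s : ℕ} (hs : s < 2 * n) (h : P.isUp s = true) :
    P.pt (s + 1) = P.pt s + 1 := by simp [pt_succ P hs, h]

lemma pt_succ_of_down {s : ℕ} (hs : s < 2 * n) (h : P.isUp s = false) :
    P.pt (s + 1) = P.pt s - 1 := by simp [pt_succ P hs, h, sub_eq_add_neg]

lemma pt_two_mul : P.pt (2 * n) = 0 := by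
  have hup := P.balanced
  have htotal := card_filter_add_card_filter_not (s := (univ : Finset (Fin (2 * n))))
    (fun i => P.step i = true)
  simp only [Bool.not_eq_true, card_univ, Fintype.card_fin] at htotal
  simp only [pt_eq, Fin.is_lt, true_and]
  omega

lemma pt_le (k : ℕ) : P.pt k ≤ n := by
  have hle : #{i : Fin (2 * n) | (i : ℕ) < k ∧ P.step i = true} ≤
      #{i : Fin (2 * n) | P.step i = true} :=
    card_le_card (monotone_filter_right _ fun _ _ h => h.2)
  rw [P.balanced] at hle
  rw [pt_eq]
  omega

lemma pt_emod_two {k : ℕ} (hk : k ≤ 2 * n) : P.pt k % 2 = (k : ℤ) % 2 := by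
  induction k with
  | zero => simp [pt_zero]
  | succ k ih =>
    have hpar := ih (by omega)
    have hstep := P.pt_succ (s := k) (by omega)
    push_cast
    split_ifs at hstep <;> omega

lemma ht_eq_pt {x : ℤ} {k : ℕ} (h : x + n = k) : P.ht x = P.pt k := by
  rw [pt, show x = k - n by omega]

lemma ht_eq_zero_of_neg {x : ℤ} (h : x + n < 0) : P.ht x = 0 := by
  have hnone : ∀ i : Fin (2 * n), ¬ (((i : ℕ) : ℤ) < x + n) := fun i => by omega
  simp [ht, hnone]

lemma ht_eq_zero_of_gt {x : ℤ} (h : n ≤ x) : P.ht x = 0 := by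
  have hall : ∀ i : Fin (2 * n), ((i : ℕ) : ℤ) < x + n := fun i => by omega
  have hall' : ∀ i : Fin (2 * n), ((i : ℕ) : ℤ) < ((2 * n : ℕ) : ℤ) - n + n := fun i => by omega
  rw [← pt_two_mul P, pt, ht, ht]
  simp only [hall, hall']

lemma ext_pt {P Q : DyckPath n} (h : ∀ k ≤ 2 * n, P.pt k = Q.pt k) : P = Q := by
  have hstep : P.step = Q.step := by
    ext ⟨s, hs⟩
    have hP := P.pt_succ hs
    rw [h s hs.le, h (s + 1) hs, Q.pt_succ hs, isUp_eq P hs, isUp_eq Q hs] at hP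
    cases hPs : P.step ⟨s, hs⟩ <;> cases hQs : Q.step ⟨s, hs⟩ <;> simp_all
  cases P
  cases Q
  congr

/-- The word of steps of a Dyck path. -/
def word : List Bool := List.ofFn P.step

lemma drop_word {s : ℕ} (hs : s < 2 * n) :
    P.word.drop s = P.isUp s :: P.word.drop (s + 1) := by
  rw [List.drop_eq_getElem_cons (by simpa [word] using hs), isUp_eq P hs]
  simp [word]

lemma drop_word_two_mul : P.word.drop (2 * n) = [] := by simp [word]

/-- The path between the points number `x` and `y` is a translate of a Dyck path. -/
structure IsBalanced (x y : ℕ) : Prop where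
  le : x ≤ y
  le_two_mul : y ≤ 2 * n
  pt_eq : P.pt x = P.pt y
  pt_le : ∀ s, x ≤ s → s ≤ y → P.pt x ≤ P.pt s

lemma isBalanced_two_mul : P.IsBalanced 0 (2 * n) where
  le := Nat.zero_le _
  le_two_mul := le_rfl
  pt_eq := by rw [P.pt_zero, P.pt_two_mul]
  pt_le s _ hs := by rw [P.pt_zero]; exact P.pt_nonneg hs

variable {P}

lemma IsBalanced.isUp_left {x y : ℕ} (h : P.IsBalanced x y) (hxy : x < y) :
    P.isUp x = true := by
  by_contra hdown
  have hpt := P.pt_succ_of_down (hxy.trans_le h.le_two_mul) (by simpa using hdown)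
  have hle := h.pt_le (x + 1) (by omega) hxy
  omega

end DyckPath

/-! ### The transfer operator of a Dyck path -/

namespace ChordLabeling

variable {n : ℕ} {P : DyckPath n} (C : ChordLabeling P)

/-- The labels of the chords whose up step lies in `[x, y)`. -/
def chordsIn (x y : ℕ) : Finset (Fin n) := {i | x ≤ C.l i ∧ C.l i < y}

/-- The strict order of the chord poset: the chord labeled `i` is strictly inside the one labeled
`j`. -/
def Inside (i j : Fin n) : Prop := C.l j < C.l i ∧ C.r i < C.r j

lemma mem_chordsIn {x y : ℕ} {i : Fin n} : i ∈ C.chordsIn x y ↔ x ≤ C.l i ∧ C.l i < y := by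
  simp [chordsIn]

lemma l_lt_r (i : Fin n) : C.l i < C.r i := (C.chord i).1

lemma l_lt (i : Fin n) : C.l i < 2 * n := (C.l_lt_r i).trans (C.chord i).2.1

lemma isUp_l (i : Fin n) : P.isUp (C.l i) = true := by
  obtain ⟨hl, hup⟩ := (C.chord i).2.2.1
  rw [P.isUp_eq hl, hup]

lemma isUp_r (i : Fin n) : P.isUp (C.r i) = false := by
  obtain ⟨hr, hdown⟩ := (C.chord i).2.2.2.1
  rw [P.isUp_eq hr, hdown]

lemma l_ne_r (i j : Fin n) : C.l i ≠ C.r j := fun h => by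
  simpa [h, C.isUp_r] using C.isUp_l i

lemma chordsIn_two_mul : C.chordsIn 0 (2 * n) = univ := by
  ext i
  simp [mem_chordsIn, C.l_lt]

lemma exists_l_eq {s : ℕ} (hs : s < 2 * n) (hup : P.isUp s = true) : ∃ i, C.l i = s := by
  set left : Fin n → Fin (2 * n) := fun i => ⟨C.l i, C.l_lt i⟩
  have himage : univ.image left = ({k | P.step k = true} : Finset _) := by
    refine eq_of_subset_of_card_le (image_subset_iff.mpr fun i _ => ?_) ?_
    · simpa [P.isUp_eq (C.l_lt i)] using C.isUp_l i
    · rw [P.balanced, card_image_of_injective _ fun i j hij => C.inj (Fin.mk.inj hij)]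
      simp
  have hmem : (⟨s, hs⟩ : Fin (2 * n)) ∈ univ.image left := by
    rw [himage]
    simpa [P.isUp_eq hs] using hup
  obtain ⟨i, -, hi⟩ := mem_image.mp hmem
  exact ⟨i, Fin.mk.inj hi⟩

variable {C}

lemma r_lt_of_isBalanced {x y : ℕ} (h : P.IsBalanced x y) {i : Fin n} (hi : i ∈ C.chordsIn x y) :
    C.r i < y := by
  obtain ⟨hxl, hly⟩ := C.mem_chordsIn.mp hi
  obtain ⟨-, -, -, -, -, hgt⟩ := C.chord i
  by_contra hyr
  have hlt := hgt y hly (not_lt.mp hyr)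
  have hle := h.pt_le (C.l i) hxl hly.le
  have heq := h.pt_eq
  omega

variable (C)

lemma isBalanced_inside (i : Fin n) : P.IsBalanced (C.l i + 1) (C.r i) := by
  obtain ⟨hlr, hr, -, -, hpt, hgt⟩ := C.chord i
  have hl := P.pt_succ_of_up (C.l_lt i) (C.isUp_l i)
  have hdown := P.pt_succ_of_down hr (C.isUp_r i)
  exact ⟨hlr, hr.le, by omega, fun s hs hsr => by have := hgt s hs hsr; omega⟩

lemma isBalanced_after {i : Fin n} {y : ℕ} (h : P.IsBalanced (C.l i) y) (hr : C.r i < y) :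
    P.IsBalanced (C.r i + 1) y := by
  obtain ⟨hlr, -, -, -, hpt, -⟩ := C.chord i
  exact ⟨hr, h.le_two_mul, hpt.trans h.pt_eq,
    fun s hs hsy => hpt.trans_le (h.pt_le s (by omega) hsy)⟩

section FirstChord

variable {i : Fin n} {y : ℕ}

lemma notMem_chordsIn_inside : i ∉ C.chordsIn (C.l i + 1) (C.r i) := by
  simp [mem_chordsIn]

lemma chordsIn_eq_union (hy : C.r i < y) : C.chordsIn (C.l i) y =
    insert i (C.chordsIn (C.l i + 1) (C.r i)) ∪ C.chordsIn (C.r i + 1) y := by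
  ext j
  have hne := C.l_ne_r j i
  have hlr := C.l_lt_r i
  have heq : j = i ↔ C.l j = C.l i := C.inj.eq_iff.symm
  simp only [mem_union, mem_insert, mem_chordsIn, heq]
  omega

lemma le_r_of_mem_insert {j : Fin n} (hj : j ∈ insert i (C.chordsIn (C.l i + 1) (C.r i))) :
    C.r j ≤ C.r i := by
  rcases mem_insert.mp hj with rfl | hj
  · exact le_rfl
  · exact (r_lt_of_isBalanced (C.isBalanced_inside i) hj).le

lemma disjoint_chordsIn :
    Disjoint (insert i (C.chordsIn (C.l i + 1) (C.r i))) (C.chordsIn (C.r i + 1) y) := by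
  rw [disjoint_left]
  intro j hj hj'
  have hr := C.le_r_of_mem_insert hj
  have hlr := C.l_lt_r j
  rw [mem_chordsIn] at hj'
  omega

lemma card_chordsIn (hy : C.r i < y) : #(C.chordsIn (C.l i) y) =
    #(C.chordsIn (C.l i + 1) (C.r i)) + 1 + #(C.chordsIn (C.r i + 1) y) := by
  rw [C.chordsIn_eq_union hy, card_union_of_disjoint C.disjoint_chordsIn,
    card_insert_of_notMem C.notMem_chordsIn_inside]

lemma card_strictMaps_chordsIn (hy : C.r i < y) (m : ℕ) :
    #(strictMaps C.Inside (C.chordsIn (C.l i) y) m) =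
      (∑ k ∈ range m, #(strictMaps C.Inside (C.chordsIn (C.l i + 1) (C.r i)) k)) *
        #(strictMaps C.Inside (C.chordsIn (C.r i + 1) y) m) := by
  rw [C.chordsIn_eq_union hy, card_strictMaps_union C.disjoint_chordsIn,
    card_strictMaps_insert C.notMem_chordsIn_inside]
  · intro j hj
    exact ⟨(C.mem_chordsIn.mp hj).1, r_lt_of_isBalanced (C.isBalanced_inside i) hj⟩
  · exact fun j hj h => ((C.mem_chordsIn.mp hj).1.trans h.1.le).not_gt (Nat.lt_succ_self _)
  · exact fun h => h.1.false
  · intro j hj k hk h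
    have hr := C.le_r_of_mem_insert hj
    have hlk := (C.mem_chordsIn.mp hk).1
    have hlr := C.l_lt_r j
    have hkj := h.1
    omega
  · intro j hj k hk h
    have hr := C.le_r_of_mem_insert hj
    have hlk := (C.mem_chordsIn.mp hk).1
    have hlr := C.l_lt_r k
    have hkj := h.2
    omega

end FirstChord

lemma exists_transfer {K : Type*} [Field K] {z : K} (hz : z ≠ 0) {x y : ℕ}
    (h : P.IsBalanced x y) :
    ∃ (F : (ℕ → K) →ₗ[K] (ℕ → K)) (d : ℕ), HasBand d F ∧
      IsTransfer z (P.word.drop x) (P.word.drop y) F ∧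
      ∀ m, F (eigenSeq z m) = ((z - 1) ^ #(C.chordsIn x y) *
        (#(strictMaps C.Inside (C.chordsIn x y) m) : K)) • eigenSeq z m := by
  induction hk : y - x using Nat.strong_induction_on generalizing x y with
  | _ k ih =>
  rcases h.le.eq_or_lt with rfl | hxy
  · have hempty : C.chordsIn x x = ∅ := by
      ext i
      simp [mem_chordsIn]
    exact ⟨LinearMap.id, 0, hasBand_id, isTransfer_id z _, by
      simp [hempty, card_strictMaps_empty]⟩
  obtain ⟨i, rfl⟩ := C.exists_l_eq (hxy.trans_le h.le_two_mul) (h.isUp_left hxy)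
  have hlr := C.l_lt_r i
  have hr : C.r i < y := r_lt_of_isBalanced h (C.mem_chordsIn.mpr ⟨le_rfl, hxy⟩)
  obtain ⟨F, d, hF, hFt, hFe⟩ := ih _ (by omega) (C.isBalanced_inside i) rfl
  obtain ⟨G, e, hG, hGt, hGe⟩ := ih _ (by omega) (C.isBalanced_after h hr) rfl
  refine ⟨wrapOp z F ∘ₗ G, _, (hF.wrapOp z).comp hG, ?_, fun m => ?_⟩
  · rw [P.drop_word (hr.trans_le h.le_two_mul), C.isUp_r] at hFt
    rw [P.drop_word (C.l_lt i), C.isUp_l]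
    exact hFt.wrapOp.comp hGt
  · rw [C.card_chordsIn hr, C.card_strictMaps_chordsIn hr, LinearMap.comp_apply, hGe, map_smul,
      wrapOp_eigenSeq hz hFe, smul_smul, ← mul_sum]
    push_cast
    ring_nf

end ChordLabeling

theorem codeSum_word_eq {K : Type*} [Field K] {z : K} (hz : z ≠ 0) (hz1 : z ≠ 1) {n : ℕ}
    {P Q : DyckPath n} (C : ChordLabeling P) (D : ChordLabeling Q)
    (h : ∀ i j, C.Inside i j ↔ D.Inside i j) :
    codeSum z P.word [] 0 = codeSum z Q.word [] 0 := by
  obtain ⟨F, d, hF, hFt, hFe⟩ := C.exists_transfer hz P.isBalanced_two_mul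
  obtain ⟨G, e, hG, hGt, hGe⟩ := D.exists_transfer hz Q.isBalanced_two_mul
  have hInside : C.Inside = D.Inside := by
    ext i j
    exact h i j
  have hFG : F = G := hF.ext_eigenSeq hz hz1 hG fun m => by
    rw [hFe, hGe, C.chordsIn_two_mul, D.chordsIn_two_mul, hInside]
  rw [P.drop_word_two_mul, List.drop_zero] at hFt
  rw [Q.drop_word_two_mul, List.drop_zero] at hGt
  have hsums := (hFt []).trans ((congrFun (congrArg DFunLike.coe hFG) _).trans (hGt []).symm)
  exact congrFun hsums 0

/-! ### Pointwise description of codes -/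

namespace DyckPath

variable {n : ℕ} (P : DyckPath n)

/-- The chord starting with the step `p` is open at the lattice point `s`. -/
def IsOpen (p s : ℕ) : Prop := p < s ∧ ∀ m, p < m → m ≤ s → P.pt p < P.pt m

/-- The chord starting with the step `p` is the innermost one open at the lattice point `s`. -/
def IsInnermost (p s : ℕ) : Prop := P.IsOpen p s ∧ P.pt s = P.pt p + 1

/-- The up steps whose chords are open at the lattice point `s`, innermost chord first. -/
def openSteps : ℕ → List ℕ
  | 0 => []
  | s + 1 => nextStack (P.isUp s) (openSteps s) s

variable {P}

lemma isOpen_succ_iff {p s : ℕ} :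
    P.IsOpen p (s + 1) ↔ P.pt p < P.pt (s + 1) ∧ (p = s ∨ P.IsOpen p s) := by
  refine ⟨fun h => ⟨h.2 _ h.1 le_rfl, ?_⟩, ?_⟩
  · rcases (Nat.lt_succ_iff.mp h.1).eq_or_lt with hps | hps
    · exact Or.inl hps
    · exact Or.inr ⟨hps, fun m hpm hms => h.2 m hpm (hms.trans (Nat.le_succ s))⟩
  · rintro ⟨hlt, rfl | h⟩
    · exact ⟨Nat.lt_succ_self _, fun m hpm hms => by rwa [show m = p + 1 by omega]⟩
    · refine ⟨h.1.trans (Nat.lt_succ_self _), fun m hpm hms => ?_⟩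
      rcases hms.eq_or_lt with rfl | hms
      · exact hlt
      · exact h.2 m hpm (Nat.lt_succ_iff.mp hms)

lemma getElem?_openSteps {s : ℕ} (hs : s ≤ 2 * n) (i p : ℕ) :
    (P.openSteps s)[i]? = some p ↔ P.IsOpen p s ∧ P.pt s = P.pt p + i + 1 := by
  induction s generalizing i with
  | zero => simp [openSteps, IsOpen]
  | succ s ih =>
    specialize ih (by omega)
    have hlt : P.IsOpen p s → P.pt p < P.pt s := fun h => h.2 s h.1 le_rfl
    rw [isOpen_succ_iff, openSteps, nextStack]
    cases hup : P.isUp s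
    · have hpt := P.pt_succ_of_down hs hup
      simp only [Bool.false_eq_true, if_false, List.getElem?_tail, ih]
      grind
    · have hpt := P.pt_succ_of_up hs hup
      rcases i with - | i
      · simp only [if_true, List.getElem?_cons_zero, Option.some.injEq]
        grind
      · simp only [if_true, List.getElem?_cons_succ, ih]
        grind

lemma length_openSteps {s : ℕ} (hs : s ≤ 2 * n) : ((P.openSteps s).length : ℤ) = P.pt s := by
  induction s with
  | zero => simp [openSteps, P.pt_zero]
  | succ s ih =>
    specialize ih (by omega)
    have hnonneg := P.pt_nonneg hs
    rw [openSteps, nextStack]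
    cases hup : P.isUp s
    · have hpt := P.pt_succ_of_down hs hup
      simp only [Bool.false_eq_true, if_false, List.length_tail]
      omega
    · simp [ih, P.pt_succ_of_up hs hup]

lemma head?_openSteps {s : ℕ} (hs : s ≤ 2 * n) {p : ℕ} :
    (P.openSteps s).head? = some p ↔ P.IsInnermost p s := by
  simp [List.head?_eq_getElem?, getElem?_openSteps hs, IsInnermost]

lemma exists_isInnermost {s : ℕ} (hs : s ≤ 2 * n) (hpos : 0 < P.pt s) :
    ∃ p, P.IsInnermost p s := by
  have hlen := length_openSteps (P := P) hs
  have hne : P.openSteps s ≠ [] := List.ne_nil_of_length_pos (by omega)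
  exact ⟨_, (head?_openSteps hs).mp (List.head?_eq_some_head hne)⟩

lemma IsInnermost.headD_map_openSteps {p s : ℕ} (h : P.IsInnermost p s) (hs : s ≤ 2 * n)
    (t : ℕ → ℕ) : ((P.openSteps s).map t).headD 0 = t p := by
  simp [List.headD_eq_head?_getD, (head?_openSteps hs).mpr h]

lemma headD_map_openSteps_le_iff {s : ℕ} (hs : s ≤ 2 * n) (t : ℕ → ℕ) (k : ℕ) :
    ((P.openSteps s).map t).headD 0 ≤ k ↔ ∀ p, P.IsInnermost p s → t p ≤ k := by
  simp only [← head?_openSteps hs]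
  cases P.openSteps s <;> simp

variable (P) in
/-- The conditions on the numbers `t` of tiles crossing the steps and the numbers `c` of boxes in
the columns that involve the step `s`. -/
structure IsCodeStep (t c : ℕ → ℕ) (s : ℕ) : Prop where
  up : P.isUp s = true → c (s + 1) ≤ c s ∧ c s ≤ c (s + 1) + 1
  down : P.isUp s = false → c s ≤ c (s + 1) ∧ c (s + 1) ≤ c s + 1
  le_left : t s ≤ c s
  le_right : t s ≤ c (s + 1)
  nested : ∀ p, P.IsInnermost p s → t p ≤ t s
  closing : ∀ p, P.IsInnermost p s → P.isUp s = false → t s ≤ t p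

lemma mem_stepChoices_iff {t c : ℕ → ℕ} {s : ℕ} (hs : s < 2 * n) :
    (t s, c (s + 1)) ∈ stepChoices (P.isUp s) ((P.openSteps s).map t) (c s) ↔
      P.IsCodeStep t c s := by
  cases hup : P.isUp s
  · have hpt := P.pt_succ_of_down hs hup
    have hnonneg := P.pt_nonneg (k := s + 1) hs
    obtain ⟨p, hp⟩ := exists_isInnermost (P := P) hs.le (by omega)
    simp only [stepChoices, Bool.false_eq_true, if_false, mem_filter, mem_product,
      mem_singleton, mem_Icc, hp.headD_map_openSteps hs.le]
    constructor
    · rintro ⟨⟨htp, hc⟩, htc⟩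
      have hhead := (headD_map_openSteps_le_iff (P := P) hs.le t (t s)).mp
      rw [hp.headD_map_openSteps hs.le] at hhead
      refine ⟨by simp [hup], fun _ => hc, htc, htc.trans hc.1, hhead htp.ge, fun q hq _ => ?_⟩
      rw [htp, ← hp.headD_map_openSteps hs.le t, hq.headD_map_openSteps hs.le t]
    · intro h
      exact ⟨⟨(h.closing p hp hup).antisymm (h.nested p hp), h.down hup⟩, h.le_left⟩
  · simp only [stepChoices, if_true, mem_filter, mem_product, mem_Icc,
      headD_map_openSteps_le_iff hs.le]
    constructor
    · rintro ⟨⟨⟨hnested, hle⟩, hc⟩, hright⟩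
      exact ⟨fun _ => ⟨hc.2, by omega⟩, by simp [hup], hle, hright, hnested, by simp [hup]⟩
    · intro h
      have hc := h.up hup
      exact ⟨⟨⟨h.nested, h.le_left⟩, by omega, hc.1⟩, h.le_right⟩

variable (P) in
/-- The numbers `t` of tiles crossing the steps and the numbers `c` of boxes in the columns form
the code of a cover-inclusive tiling with lower path `P`. -/
structure IsCode (t c : ℕ → ℕ) : Prop where
  start : c 0 = 0
  finish : c (2 * n) = 0
  step : ∀ s < 2 * n, P.IsCodeStep t c s

lemma IsCode.nested {t c : ℕ → ℕ} (h : P.IsCode t c) {p s : ℕ} (hs : s < 2 * n)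
    (hp : P.IsOpen p s) : t p ≤ t s := by
  induction s using Nat.strong_induction_on with
  | _ s ih =>
    have hlt := hp.2 s hp.1 le_rfl
    have hnonneg := P.pt_nonneg (k := p) (by have := hp.1; omega)
    obtain ⟨q, hq⟩ := exists_isInnermost (P := P) hs.le (by omega)
    refine le_trans ?_ ((h.step s hs).nested q hq)
    rcases lt_trichotomy p q with hpq | rfl | hqp
    · exact ih q hq.1.1 (hq.1.1.trans hs)
        ⟨hpq, fun m hpm hmq => hp.2 m hpm (hmq.trans hq.1.1.le)⟩
    · exact le_rfl
    · have := hq.1.2 p hqp hp.1.le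
      have := hq.2
      omega

/-- The list of the values of `t` and `c` along `k` steps from the step `s` on. -/
def codeList (t c : ℕ → ℕ) (s k : ℕ) : List (ℕ × ℕ) :=
  (List.range' s k).map fun r => (t r, c (r + 1))

lemma codeList_succ (t c : ℕ → ℕ) (s k : ℕ) :
    codeList t c s (k + 1) = (t s, c (s + 1)) :: codeList t c (s + 1) k := by
  simp [codeList, List.range'_succ]

lemma codeList_eq_codeList_iff {t c t' c' : ℕ → ℕ} {k : ℕ} :
    codeList t c 0 k = codeList t' c' 0 k ↔ ∀ s < k, t s = t' s ∧ c (s + 1) = c' (s + 1) := by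
  simp [codeList, List.map_inj_left]

lemma map_openSteps_succ (t : ℕ → ℕ) (s : ℕ) :
    (P.openSteps (s + 1)).map t = nextStack (P.isUp s) ((P.openSteps s).map t) (t s) := by
  cases hup : P.isUp s <;> simp [openSteps, nextStack, hup]

lemma codeList_mem_codes_drop_iff {t c : ℕ → ℕ} {s k : ℕ} (hk : s + k = 2 * n) :
    codeList t c s k ∈ codes (P.word.drop s) ((P.openSteps s).map t) (c s) ↔
      (∀ r, s ≤ r → r < 2 * n → P.IsCodeStep t c r) ∧ c (2 * n) = 0 := by
  induction k generalizing s with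
  | zero =>
    obtain rfl : s = 2 * n := by omega
    have hvacuous : ∀ r, 2 * n ≤ r → r < 2 * n → P.IsCodeStep t c r := fun r h h' => by omega
    rw [P.drop_word_two_mul]
    by_cases hc : c (2 * n) = 0 <;> simp +contextual [codes, codeList, hc, hvacuous]
  | succ k ih =>
    have hs : s < 2 * n := by omega
    specialize ih (s := s + 1) (by omega)
    rw [map_openSteps_succ] at ih
    rw [P.drop_word hs, codes, codeList_succ]
    simp only [mem_biUnion, mem_image, List.cons.injEq]
    constructor
    · rintro ⟨p, hp, d, hd, rfl, rfl⟩
      obtain ⟨hsteps, hfinish⟩ := ih.mp hd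
      refine ⟨fun r hsr hr => ?_, hfinish⟩
      rcases hsr.eq_or_lt with rfl | hsr
      · exact (mem_stepChoices_iff hs).mp hp
      · exact hsteps r hsr hr
    · rintro ⟨hsteps, hfinish⟩
      exact ⟨_, (mem_stepChoices_iff hs).mpr (hsteps s le_rfl hs), _,
        ih.mpr ⟨fun r hsr hr => hsteps r (by omega) hr, hfinish⟩, rfl, rfl⟩

lemma codeList_mem_codes_iff {t c : ℕ → ℕ} (h0 : c 0 = 0) :
    codeList t c 0 (2 * n) ∈ codes P.word [] 0 ↔ P.IsCode t c := by
  have hiff := codeList_mem_codes_drop_iff (P := P) (t := t) (c := c) (s := 0) (k := 2 * n)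
    (by omega)
  rw [List.drop_zero, h0] at hiff
  refine hiff.trans ⟨fun h => ⟨h0, h.2, fun s hs => h.1 s s.zero_le hs⟩,
    fun h => ⟨fun s _ hs => h.step s hs, h.finish⟩⟩

lemma length_of_mem_codes {L : List Bool} {σ : List ℕ} {c : ℕ} {d : List (ℕ × ℕ)}
    (hd : d ∈ codes L σ c) : d.length = L.length := by
  induction L generalizing σ c d with
  | nil =>
    rw [codes] at hd
    split_ifs at hd
    · simp [mem_singleton.mp hd]
    · simp at hd
  | cons b L ih =>
    simp only [codes, mem_biUnion, mem_image] at hd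
    obtain ⟨p, -, d', hd', rfl⟩ := hd
    simp [ih hd']

lemma exists_isCode_of_mem_codes {d : List (ℕ × ℕ)} (hd : d ∈ codes P.word [] 0) :
    ∃ t c, P.IsCode t c ∧ codeList t c 0 (2 * n) = d := by
  have hlen : d.length = 2 * n := by rw [length_of_mem_codes hd]; simp [word]
  let t : ℕ → ℕ := fun s => (d.getD s 0).1
  let c : ℕ → ℕ := fun s => if s = 0 then 0 else (d.getD (s - 1) 0).2
  have heq : codeList t c 0 (2 * n) = d :=
    List.ext_getElem (by simp [codeList, hlen]) fun i _ hi => by simp [codeList, t, c, hi]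
  exact ⟨t, c, (codeList_mem_codes_iff (by simp [c])).mp (heq ▸ hd), heq⟩

lemma codeDis_codeList {t c : ℕ → ℕ} {s k : ℕ} (hk : s + k = 2 * n) :
    codeDis (P.word.drop s) (c s) (codeList t c s k) =
      ∑ r ∈ Ico s (2 * n), if P.isUp r = false ∧ c (r + 1) = c r + 1 then 1 else 0 := by
  induction k generalizing s with
  | zero =>
    obtain rfl : s = 2 * n := by omega
    simp [codeList, codeDis]
  | succ k ih =>
    have hs : s < 2 * n := by omega
    rw [P.drop_word hs, codeList_succ, codeDis, sum_eq_sum_Ico_succ_bot hs, ih (by omega)]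

end DyckPath

/-! ### Boxes of a skew shape -/

namespace DyckPath

variable {n : ℕ} (P : DyckPath n)

/-- The box at level `l` above the lattice point number `k` of `P`. -/
def cell (k l : ℕ) : ℤ × ℤ := ((k : ℤ) - n, P.pt k + 2 * l)

/-- The boxes at level `l` above the lattice points `a, …, b` of `P`. -/
def seg (a b l : ℕ) : Finset (ℤ × ℤ) := (Icc a b).image fun k => P.cell k l

variable {P}

lemma cell_inj {k l k' l' : ℕ} : P.cell k l = P.cell k' l' ↔ k = k' ∧ l = l' := by
  simp only [cell, Prod.mk.injEq]
  constructor
  · rintro ⟨hk, hl⟩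
    obtain rfl : k = k' := by omega
    exact ⟨rfl, by omega⟩
  · rintro ⟨rfl, rfl⟩
    exact ⟨rfl, rfl⟩

lemma mem_seg {a b l : ℕ} {p : ℤ × ℤ} :
    p ∈ P.seg a b l ↔ ∃ k, a ≤ k ∧ k ≤ b ∧ p = P.cell k l := by
  simp only [seg, mem_image, mem_Icc, and_assoc, eq_comm (a := p)]

lemma cell_mem_seg {a b l k m : ℕ} : P.cell k m ∈ P.seg a b l ↔ a ≤ k ∧ k ≤ b ∧ m = l := by
  simp only [mem_seg, cell_inj]
  constructor
  · rintro ⟨_, hak, hkb, rfl, hm⟩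
    exact ⟨hak, hkb, hm⟩
  · rintro ⟨hak, hkb, hm⟩
    exact ⟨k, hak, hkb, rfl, hm⟩

lemma mem_skewCells {Q : DyckPath n} {c : ℕ → ℕ}
    (hc : ∀ k ≤ 2 * n, Q.pt k = P.pt k + 2 * c k) {p : ℤ × ℤ} :
    p ∈ skewCells P Q ↔ ∃ k ≤ 2 * n, ∃ l < c k, p = P.cell k l := by
  simp only [skewCells, mem_filter, mem_product, mem_Icc]
  constructor
  · rintro ⟨⟨⟨hleft, hright⟩, -⟩, hlower, hupper, hparity⟩
    obtain ⟨k, hk⟩ := Int.eq_ofNat_of_zero_le (show 0 ≤ p.1 + n by omega)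
    have hk2 : k ≤ 2 * n := by omega
    rw [P.ht_eq_pt hk] at hlower
    rw [Q.ht_eq_pt hk, hc k hk2] at hupper
    have hpt := P.pt_emod_two hk2
    refine ⟨k, hk2, ((p.2 - P.pt k) / 2).toNat, by omega, Prod.ext ?_ ?_⟩ <;>
      simp only [cell] <;> omega
  · rintro ⟨k, hk, l, hl, rfl⟩
    have hx : (P.cell k l).1 + n = k := by simp [cell]
    have hck := hc k hk
    have hle := Q.pt_le k
    have hnonneg := P.pt_nonneg hk
    have hpt := P.pt_emod_two hk
    rw [P.ht_eq_pt hx, Q.ht_eq_pt hx]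
    simp only [cell]
    omega

lemma IsBalanced.isDyckTile_seg {a b : ℕ} (h : P.IsBalanced a b) (l : ℕ) :
    IsDyckTile (P.seg a b l) := by
  have hcol : ∀ x : ℤ, (a : ℤ) - n ≤ x → x ≤ (b : ℤ) - n →
      ∃ k : ℕ, a ≤ k ∧ k ≤ b ∧ x = k - n ∧ P.ht x = P.pt k := fun x hax hxb => by
    obtain ⟨k, hk⟩ := Int.eq_ofNat_of_zero_le (show 0 ≤ x + n by omega)
    exact ⟨k, by omega, by omega, by omega, P.ht_eq_pt hk⟩
  have hab := h.le
  have hb := h.le_two_mul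
  refine ⟨(a : ℤ) - n, (b : ℤ) - n, fun x => P.ht x + 2 * l, by omega, fun x hax hxb => ?_,
    congrArg (· + 2 * (l : ℤ)) h.pt_eq.symm, fun x hax hxb => ?_, ?_⟩
  · obtain ⟨k, _, _, hx, hk⟩ := hcol x hax hxb.le
    have hsucc := P.pt_succ (s := k) (by omega)
    beta_reduce
    rw [hk, P.ht_eq_pt (k := k + 1) (by push_cast; omega), hsucc]
    split_ifs <;> omega
  · obtain ⟨k, hak, hkb, -, hk⟩ := hcol x hax hxb
    beta_reduce
    rw [hk]
    exact add_le_add_left (h.pt_le k hak hkb) _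
  · ext p
    simp only [mem_seg, mem_image, mem_Icc]
    constructor
    · rintro ⟨k, hak, hkb, rfl⟩
      exact ⟨(k : ℤ) - n, by omega, rfl⟩
    · rintro ⟨x, ⟨hax, hxb⟩, rfl⟩
      obtain ⟨k, hak, hkb, hx, hk⟩ := hcol x hax hxb
      exact ⟨k, hak, hkb, by rw [cell, ← hk, hx]⟩

end DyckPath

/-! ### Runs of a code -/

namespace DyckPath

variable {n : ℕ}

/-- A run of `(t, c)` at level `l`: a maximal interval of lattice points whose boxes at level `l`
are connected, the boxes on the two sides of the step `s` being connected when `l < t s`. -/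
structure IsRun (n : ℕ) (t c : ℕ → ℕ) (a b l : ℕ) : Prop where
  le : a ≤ b
  lt_two_mul : b < 2 * n
  lt_col : l < c a
  cross : ∀ s, a ≤ s → s < b → l < t s
  left : ∀ s, s + 1 = a → t s ≤ l
  right : t b ≤ l

variable {P : DyckPath n} {t c : ℕ → ℕ}

lemma IsCode.lt_of_lt_cross {l s : ℕ} (hg : P.IsCode t c) (hs : s < 2 * n) (hl : l < t s) :
    l < c s ∧ l < c (s + 1) :=
  ⟨hl.trans_le (hg.step s hs).le_left, hl.trans_le (hg.step s hs).le_right⟩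

lemma IsRun.lt_count {a b l : ℕ} (h : IsRun n t c a b l) (hg : P.IsCode t c) {k : ℕ}
    (hak : a ≤ k) (hkb : k ≤ b) : l < c k := by
  induction k, hak using Nat.le_induction with
  | base => exact h.lt_col
  | succ k hak _ =>
    exact (hg.lt_of_lt_cross (by have := h.lt_two_mul; omega) (h.cross k hak hkb)).2

lemma IsRun.subset {a b l a' b' l' x : ℕ} (h : IsRun n t c a b l) (h' : IsRun n t c a' b' l')
    (hl : l' ≤ l) (hax : a ≤ x) (hxb : x ≤ b) (hax' : a' ≤ x) (hxb' : x ≤ b') :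
    a' ≤ a ∧ b ≤ b' := by
  constructor
  · by_contra! hlt
    have hcross := h.cross (a' - 1) (by omega) (by omega)
    have hleft := h'.left (a' - 1) (by omega)
    omega
  · by_contra! hlt
    have hcross := h.cross b' (by omega) (by omega)
    have hright := h'.right
    omega

lemma IsRun.eq_of_mem {a b l a' b' x : ℕ} (h : IsRun n t c a b l) (h' : IsRun n t c a' b' l)
    (hax : a ≤ x) (hxb : x ≤ b) (hax' : a' ≤ x) (hxb' : x ≤ b') : a = a' ∧ b = b' := by
  have hsub := h.subset h' le_rfl hax hxb hax' hxb'
  have hsub' := h'.subset h le_rfl hax' hxb' hax hxb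
  omega

lemma exists_run_left (t : ℕ → ℕ) (l x : ℕ) :
    ∃ a ≤ x, (∀ s, a ≤ s → s < x → l < t s) ∧ ∀ s, s + 1 = a → t s ≤ l := by
  induction x with
  | zero => exact ⟨0, le_rfl, by omega, by omega⟩
  | succ x ih =>
    obtain ⟨a, hax, hcross, hleft⟩ := ih
    by_cases hx : l < t x
    · refine ⟨a, by omega, fun s has hs => ?_, hleft⟩
      rcases (Nat.lt_succ_iff.mp hs).eq_or_lt with rfl | hs
      · exact hx
      · exact hcross s has hs
    · refine ⟨x + 1, le_rfl, by omega, fun s hs => ?_⟩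
      obtain rfl : s = x := by omega
      omega

lemma IsCode.exists_run_right (hg : P.IsCode t c) {x l : ℕ} (hx : x ≤ 2 * n) (hl : l < c x) :
    ∃ b, x ≤ b ∧ b < 2 * n ∧ (∀ s, x ≤ s → s < b → l < t s) ∧ t b ≤ l := by
  have hfinish := hg.finish
  have hex : ∃ b, x ≤ b ∧ b < 2 * n ∧ t b ≤ l := by
    rcases hx.eq_or_lt with rfl | hx
    · omega
    · by_contra! hcross
      have hlast := (hg.lt_of_lt_cross (s := 2 * n - 1) (by omega)
        (hcross _ (by omega) (by omega))).2
      rw [Nat.sub_add_cancel (by omega)] at hlast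
      omega
  obtain ⟨hxb, hb, hright⟩ := Nat.find_spec hex
  refine ⟨Nat.find hex, hxb, hb, fun s hxs hsb => ?_, hright⟩
  by_contra! hts
  exact Nat.find_min hex hsb ⟨hxs, hsb.trans hb, hts⟩

lemma IsCode.exists_isRun (hg : P.IsCode t c) {x l : ℕ} (hx : x ≤ 2 * n) (hl : l < c x) :
    ∃ a b, IsRun n t c a b l ∧ a ≤ x ∧ x ≤ b := by
  obtain ⟨a, hax, hcrossa, hleft⟩ := exists_run_left t l x
  obtain ⟨b, hxb, hb, hcrossb, hright⟩ := hg.exists_run_right hx hl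
  refine ⟨a, b, ⟨hax.trans hxb, hb, ?_, fun s has hsb => ?_, hleft, hright⟩, hax, hxb⟩
  · rcases hax.eq_or_lt with rfl | hax
    · exact hl
    · exact (hg.lt_of_lt_cross (by omega) (hcrossa a le_rfl hax)).1
  · rcases lt_or_ge s x with hsx | hxs
    · exact hcrossa s has hsx
    · exact hcrossb s hxs hsb

/- If the path went below its height at `a`, it would close a chord that is already open at `a`;
the crossing numbers of the two ends of this chord agree, so the run would extend to the left
of `a`. -/
lemma IsRun.pt_left_le {a b l : ℕ} (h : IsRun n t c a b l) (hg : P.IsCode t c) {x : ℕ}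
    (hax : a ≤ x) (hxb : x ≤ b) : P.pt a ≤ P.pt x := by
  have hb := h.lt_two_mul
  induction x using Nat.strong_induction_on with
  | _ x ih =>
    rcases hax.eq_or_lt with rfl | hax
    · exact le_rfl
    obtain ⟨y, rfl⟩ : ∃ y, x = y + 1 := ⟨x - 1, by omega⟩
    by_contra! hlt
    have hy := ih y (by omega) (by omega) (by omega)
    have hnonneg := P.pt_nonneg (k := y + 1) (by omega)
    have hdown : P.isUp y = false := by
      by_contra hup
      have := P.pt_succ_of_up (s := y) (by omega) (by simpa using hup)
      omega
    have hsucc := P.pt_succ_of_down (s := y) (by omega) hdown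
    obtain ⟨p, hp, hpa⟩ := exists_isInnermost (P := P) (s := a) (by omega) (by omega)
    have hpy : P.IsInnermost p y := by
      refine ⟨⟨by have := hp.1; omega, fun m hpm hmy => ?_⟩, by omega⟩
      rcases le_or_gt m a with hma | ham
      · exact hp.2 m hpm hma
      · have := ih m (by omega) (by omega) (by omega)
        omega
    have hclosing := (hg.step y (by omega)).closing p hpy hdown
    have hcross := h.cross y (by omega) (by omega)
    have hleft := h.left (a - 1) (by have := hp.1; omega)
    have hnested : t p ≤ t (a - 1) := by
      rcases (show p ≤ a - 1 by have := hp.1; omega).eq_or_lt with heq | hlt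
      · rw [heq]
      · exact hg.nested (by omega) ⟨hlt, fun m hpm hma => hp.2 m hpm (by omega)⟩
    omega

lemma IsRun.pt_right_le {a b l : ℕ} (h : IsRun n t c a b l) (hg : P.IsCode t c) {x : ℕ}
    (hax : a ≤ x) (hxb : x ≤ b) : P.pt b ≤ P.pt x := by
  by_contra! hlt
  have hb := h.lt_two_mul
  have hnonneg := P.pt_nonneg (k := x) (by omega)
  obtain ⟨p, hp, hpb⟩ := exists_isInnermost (P := P) hb.le (by omega)
  have hxp : x ≤ p := by
    by_contra! hpx
    have := hp.2 x hpx hxb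
    omega
  have hnested := hg.nested hb hp
  have hcross := h.cross p (by omega) hp.1
  have hright := h.right
  omega

lemma IsRun.isBalanced {a b l : ℕ} (h : IsRun n t c a b l) (hg : P.IsCode t c) :
    P.IsBalanced a b where
  le := h.le
  le_two_mul := h.lt_two_mul.le
  pt_eq := (h.pt_left_le hg h.le le_rfl).antisymm (h.pt_right_le hg le_rfl h.le)
  pt_le _ := h.pt_left_le hg

variable (P t c) in
open Classical in
/-- The tiles given by the runs of `(t, c)`. -/
def runTiles : Finset (Finset (ℤ × ℤ)) :=
  (range (2 * n) ×ˢ range (2 * n)).biUnion fun q =>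
    {l ∈ range (c q.1) | IsRun n t c q.1 q.2 l}.image (P.seg q.1 q.2)

lemma mem_runTiles {u : Finset (ℤ × ℤ)} :
    u ∈ P.runTiles t c ↔ ∃ a b l, IsRun n t c a b l ∧ P.seg a b l = u := by
  simp only [runTiles, mem_biUnion, mem_product, mem_image, mem_filter, mem_range]
  constructor
  · rintro ⟨q, -, l, ⟨-, h⟩, rfl⟩
    exact ⟨_, _, _, h, rfl⟩
  · rintro ⟨a, b, l, h, rfl⟩
    exact ⟨(a, b), ⟨h.le.trans_lt h.lt_two_mul, h.lt_two_mul⟩, l, ⟨h.lt_col, h⟩, rfl⟩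

lemma IsRun.congr {t' c' : ℕ → ℕ} {a b l : ℕ} (h : IsRun n t c a b l)
    (ht : ∀ s < 2 * n, t s = t' s) (hc : ∀ k ≤ 2 * n, c k = c' k) : IsRun n t' c' a b l := by
  have hab := h.le
  have hb := h.lt_two_mul
  exact ⟨hab, hb, hc a (by omega) ▸ h.lt_col,
    fun s has hsb => ht s (by omega) ▸ h.cross s has hsb,
    fun s hs => ht s (by omega) ▸ h.left s hs, ht b hb ▸ h.right⟩

lemma runTiles_congr {t' c' : ℕ → ℕ} (ht : ∀ s < 2 * n, t s = t' s)
    (hc : ∀ k ≤ 2 * n, c k = c' k) : P.runTiles t c = P.runTiles t' c' := by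
  ext u
  simp only [mem_runTiles]
  refine exists₃_congr fun a b l => and_congr_left fun _ => ⟨fun h => h.congr ht hc, fun h => ?_⟩
  exact h.congr (fun s hs => (ht s hs).symm) fun k hk => (hc k hk).symm

end DyckPath

/-! ### The structure of cover-inclusive tilings -/

namespace DyckPath

variable {n : ℕ} {P : DyckPath n}

variable (P) in
/-- The tile `t` occupies the columns `a, …, b` above `P`, with a box at level `g k` in the
column `k`. -/
structure IsProfile (t : Finset (ℤ × ℤ)) (a b : ℕ) (g : ℕ → ℕ) : Prop where
  le : a ≤ b
  le_two_mul : b ≤ 2 * n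
  cell_mem : ∀ k l, P.cell k l ∈ t ↔ a ≤ k ∧ k ≤ b ∧ l = g k
  step : ∀ k, a ≤ k → k < b → P.pt (k + 1) + 2 * g (k + 1) = P.pt k + 2 * g k + 1 ∨
    P.pt (k + 1) + 2 * g (k + 1) = P.pt k + 2 * g k - 1
  ends : P.pt a + 2 * g a = P.pt b + 2 * g b
  ends_le : ∀ k, a ≤ k → k ≤ b → P.pt a + 2 * g a ≤ P.pt k + 2 * g k

lemma exists_isProfile {t : Finset (ℤ × ℤ)} (ht : IsDyckTile t)
    (hcell : ∀ p ∈ t, ∃ k ≤ 2 * n, ∃ l : ℕ, p = P.cell k l) : ∃ a b g, P.IsProfile t a b g := by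
  obtain ⟨A, B, f, hAB, hstep, hends, hmin, rfl⟩ := ht
  have hlevel : ∀ x, A ≤ x → x ≤ B → ∃ k ≤ 2 * n, ∃ l : ℕ, x = (k : ℤ) - n ∧
      f x = P.pt k + 2 * l := by
    intro x hAx hxB
    obtain ⟨k, hk, l, h⟩ := hcell (x, f x) (mem_image_of_mem _ (mem_Icc.mpr ⟨hAx, hxB⟩))
    exact ⟨k, hk, l, Prod.mk.inj h⟩
  obtain ⟨a, -, -, rfl, -⟩ := hlevel A le_rfl hAB
  obtain ⟨b, hb, -, rfl, -⟩ := hlevel B hAB le_rfl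
  let g : ℕ → ℕ := fun k => ((f ((k : ℤ) - n) - P.pt k) / 2).toNat
  have hg : ∀ k : ℕ, a ≤ k → k ≤ b → f ((k : ℤ) - n) = P.pt k + 2 * g k := by
    intro k hak hkb
    obtain ⟨k', -, l, hk, hl⟩ := hlevel ((k : ℤ) - n) (by omega) (by omega)
    obtain rfl : k = k' := by omega
    simp only [g]
    omega
  have hab : a ≤ b := by omega
  refine ⟨a, b, g, hab, hb, fun k l => ?_, fun k hak hkb => ?_, ?_, fun k hak hkb => ?_⟩
  · simp only [mem_image, mem_Icc, cell, Prod.mk.injEq]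
    constructor
    · rintro ⟨x, hx, rfl, hl⟩
      have := hg k (by omega) (by omega)
      omega
    · rintro ⟨hak, hkb, rfl⟩
      exact ⟨(k : ℤ) - n, by omega, rfl, hg k hak hkb⟩
  · rw [← hg k hak hkb.le, ← hg (k + 1) (by omega) hkb]
    convert hstep ((k : ℤ) - n) (by omega) (by omega) using 3 <;> push_cast <;> ring_nf
  · rw [← hg a le_rfl hab, ← hg b hab le_rfl, hends]
  · rw [← hg a le_rfl hab, ← hg k hak hkb]
    exact hmin _ (by omega) (by omega)

lemma IsProfile.lt_iff_lt {t u : Finset (ℤ × ℤ)} {a b a' b' : ℕ} {g g' : ℕ → ℕ}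
    (ht : P.IsProfile t a b g) (hu : P.IsProfile u a' b' g') (ha : a' ≤ a) (hb : b ≤ b')
    (hne : ∀ k, a ≤ k → k ≤ b → g k ≠ g' k) {k : ℕ} (hak : a ≤ k) (hkb : k ≤ b) :
    g' k < g k ↔ g' a < g a := by
  induction k, hak using Nat.le_induction with
  | base => rfl
  | succ k hak ih =>
    rw [← ih (by omega)]
    have hb2 := ht.le_two_mul
    have hk := hne k hak (by omega)
    have hk' := hne (k + 1) (by omega) hkb
    have hstep := ht.step k hak hkb
    have hstep' := hu.step k (by omega) (by omega)
    have hsucc := P.pt_succ (s := k) (by omega)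
    split_ifs at hsucc <;> omega

lemma IsProfile.eq_seg {t : Finset (ℤ × ℤ)} {a b l : ℕ} {g : ℕ → ℕ}
    (ht : P.IsProfile t a b g) (hcell : ∀ p ∈ t, ∃ k ≤ 2 * n, ∃ l : ℕ, p = P.cell k l)
    (hg : ∀ k, a ≤ k → k ≤ b → g k = l) : t = P.seg a b l := by
  ext p
  rw [mem_seg]
  constructor
  · intro hp
    obtain ⟨k, -, m, rfl⟩ := hcell p hp
    obtain ⟨hak, hkb, rfl⟩ := (ht.cell_mem _ _).mp hp
    exact ⟨k, hak, hkb, by rw [hg k hak hkb]⟩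
  · rintro ⟨k, hak, hkb, rfl⟩
    exact (ht.cell_mem _ _).mpr ⟨hak, hkb, (hg k hak hkb).symm⟩

lemma IsProfile.isBalanced {t : Finset (ℤ × ℤ)} {a b l : ℕ} {g : ℕ → ℕ}
    (ht : P.IsProfile t a b g) (hg : ∀ k, a ≤ k → k ≤ b → g k = l) : P.IsBalanced a b where
  le := ht.le
  le_two_mul := ht.le_two_mul
  pt_eq := by
    have := ht.ends
    rw [hg a le_rfl ht.le, hg b ht.le le_rfl] at this
    omega
  pt_le k hak hkb := by
    have := ht.ends_le k hak hkb
    rw [hg a le_rfl ht.le, hg k hak hkb] at this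
    omega

end DyckPath

namespace DyckTiling

variable {n : ℕ} (T : DyckTiling n)

/-- The number of boxes above the lattice point number `k` of the lower path. -/
def colCount (k : ℕ) : ℕ := ((T.upper.pt k - T.lower.pt k) / 2).toNat

/-- Some tile has boxes at level `l` on both sides of the step `s`. -/
def Crosses (s l : ℕ) : Prop :=
  ∃ t ∈ T.tiles, T.lower.cell s l ∈ t ∧ T.lower.cell (s + 1) l ∈ t

/-- The number of tiles crossing the step `s`, defined as the first level at which no tile crosses
it; in a cover-inclusive tiling these levels are exactly the ones below the first such level. -/
def crossCount (s : ℕ) : ℕ := sInf {l | ¬ T.Crosses s l}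

lemma upper_pt {k : ℕ} (hk : k ≤ 2 * n) : T.upper.pt k = T.lower.pt k + 2 * T.colCount k := by
  have hlower := T.lower.pt_emod_two hk
  have hupper := T.upper.pt_emod_two hk
  have hle : T.lower.pt k ≤ T.upper.pt k := T.below _
  simp only [colCount]
  omega

lemma colCount_zero : T.colCount 0 = 0 := by simp [colCount, DyckPath.pt_zero]

lemma colCount_two_mul : T.colCount (2 * n) = 0 := by simp [colCount, DyckPath.pt_two_mul]

lemma upper_isUp_eq_true_iff {s : ℕ} (hs : s < 2 * n) : T.upper.isUp s = true ↔
    T.lower.pt (s + 1) + 2 * T.colCount (s + 1) = T.lower.pt s + 2 * T.colCount s + 1 := by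
  rw [← T.upper_pt hs.le, ← T.upper_pt (k := s + 1) hs, T.upper.pt_succ hs]
  split_ifs with hup <;> simp [hup]

lemma mem_tile {t : Finset (ℤ × ℤ)} (ht : t ∈ T.tiles) {p : ℤ × ℤ} (hp : p ∈ t) :
    ∃ k ≤ 2 * n, ∃ l < T.colCount k, p = T.lower.cell k l := by
  rw [← DyckPath.mem_skewCells fun k hk => T.upper_pt hk, ← T.cover, mem_biUnion]
  exact ⟨t, ht, hp⟩

lemma bounds_of_cell_mem {t : Finset (ℤ × ℤ)} (ht : t ∈ T.tiles) {k l : ℕ}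
    (h : T.lower.cell k l ∈ t) : k ≤ 2 * n ∧ l < T.colCount k := by
  obtain ⟨k', hk, l', hl, h⟩ := T.mem_tile ht h
  obtain ⟨rfl, rfl⟩ := DyckPath.cell_inj.mp h
  exact ⟨hk, hl⟩

lemma exists_tile {k l : ℕ} (hk : k ≤ 2 * n) (hl : l < T.colCount k) :
    ∃ t ∈ T.tiles, T.lower.cell k l ∈ t := by
  have hcell := (DyckPath.mem_skewCells fun k hk => T.upper_pt hk).mpr ⟨k, hk, l, hl, rfl⟩
  rwa [← T.cover, mem_biUnion] at hcell

lemma tile_unique {t u : Finset (ℤ × ℤ)} (ht : t ∈ T.tiles) (hu : u ∈ T.tiles) {p : ℤ × ℤ}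
    (hpt : p ∈ t) (hpu : p ∈ u) : t = u := by
  by_contra h
  exact disjoint_left.mp (T.disj t ht u hu h) hpt hpu

lemma exists_cell {t : Finset (ℤ × ℤ)} (ht : t ∈ T.tiles) {p : ℤ × ℤ} (hp : p ∈ t) :
    ∃ k ≤ 2 * n, ∃ l : ℕ, p = T.lower.cell k l := by
  obtain ⟨k, hk, l, -, h⟩ := T.mem_tile ht hp
  exact ⟨k, hk, l, h⟩

lemma exists_profile {t : Finset (ℤ × ℤ)} (ht : t ∈ T.tiles) :
    ∃ a b g, T.lower.IsProfile t a b g :=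
  DyckPath.exists_isProfile (T.isDyck t ht) fun _ => T.exists_cell ht

variable {T}

lemma CoverInclusive.exists_cell_mem (hT : T.CoverInclusive) {t v : Finset (ℤ × ℤ)}
    (ht : t ∈ T.tiles) (hv : v ∈ T.tiles) {x i j : ℕ} (hi : T.lower.cell x i ∈ t)
    (hj : T.lower.cell x j ∈ v) (hji : j < i) {y k : ℕ} (hk : T.lower.cell y k ∈ t) :
    ∃ m, T.lower.cell y m ∈ v := by
  obtain ⟨w, hw⟩ := hT t ht v hv ⟨_, hi, _, hj, rfl, by simp only [DyckPath.cell]; omega⟩ _ hk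
  obtain ⟨z, -, m, hz⟩ := T.exists_cell hv hw
  have hyz := congrArg Prod.fst hz
  simp only [DyckPath.cell] at hyz
  obtain rfl : y = z := by omega
  exact ⟨m, hz ▸ hw⟩

lemma CoverInclusive.exists_below (hT : T.CoverInclusive) {t v : Finset (ℤ × ℤ)}
    (ht : t ∈ T.tiles) (hv : v ∈ T.tiles) {x i j : ℕ} (hi : T.lower.cell x i ∈ t)
    (hj : T.lower.cell x j ∈ v) (hji : j < i) {y k : ℕ} (hk : T.lower.cell y k ∈ t) :
    ∃ m < k, T.lower.cell y m ∈ v := by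
  obtain ⟨a, b, g, hg⟩ := T.exists_profile ht
  obtain ⟨a', b', g', hg'⟩ := T.exists_profile hv
  obtain ⟨hax, hxb, rfl⟩ := (hg.cell_mem _ _).mp hi
  obtain ⟨-, -, rfl⟩ := (hg'.cell_mem _ _).mp hj
  obtain ⟨hay, hyb, rfl⟩ := (hg.cell_mem _ _).mp hk
  have hcell : ∀ z, a ≤ z → z ≤ b → T.lower.cell z (g z) ∈ t := fun z haz hzb =>
    (hg.cell_mem _ _).mpr ⟨haz, hzb, rfl⟩
  have hcell' : ∀ z, a ≤ z → z ≤ b → a' ≤ z ∧ z ≤ b' ∧ T.lower.cell z (g' z) ∈ v := by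
    intro z haz hzb
    obtain ⟨m, hm⟩ := hT.exists_cell_mem ht hv hi hj hji (hcell z haz hzb)
    obtain ⟨haz', hzb', rfl⟩ := (hg'.cell_mem _ _).mp hm
    exact ⟨haz', hzb', hm⟩
  have hne : ∀ z, a ≤ z → z ≤ b → g z ≠ g' z := by
    intro z haz hzb heq
    obtain rfl := T.tile_unique ht hv (hcell z haz hzb) (heq ▸ (hcell' z haz hzb).2.2)
    exact hji.ne ((hg.cell_mem _ _).mp hj).2.2
  have hlt_iff : ∀ z, a ≤ z → z ≤ b → (g' z < g z ↔ g' a < g a) := fun z =>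
    hg.lt_iff_lt hg' (hcell' a le_rfl hg.le).1 (hcell' b hg.le le_rfl).2.1 hne
  exact ⟨g' y, (hlt_iff y hay hyb).mpr ((hlt_iff x hax hxb).mp hji), (hcell' y hay hyb).2.2⟩

/- The tile covering the box just below the higher of two boxes of `t` extends below the lower one
as well, so its levels differ too and its lowest level is smaller. -/
lemma CoverInclusive.level_eq (hT : T.CoverInclusive) {t : Finset (ℤ × ℤ)} (ht : t ∈ T.tiles)
    {x y k m : ℕ} (hk : T.lower.cell x k ∈ t) (hm : T.lower.cell y m ∈ t) : k = m := by
  induction k using Nat.strong_induction_on generalizing t x y m with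
  | _ k ih =>
    rcases lt_trichotomy k m with hkm | hkm | hmk
    · have hbounds := T.bounds_of_cell_mem ht hm
      obtain ⟨v, hv, hmv⟩ := T.exists_tile (l := m - 1) hbounds.1 (by omega)
      obtain ⟨j, hj, hjv⟩ := hT.exists_below ht hv hm hmv (by omega) hk
      have := ih j hj hv hjv hmv
      omega
    · exact hkm
    · exact (ih m hmk ht hm hk).symm

lemma CoverInclusive.exists_eq_seg (hT : T.CoverInclusive) {t : Finset (ℤ × ℤ)}
    (ht : t ∈ T.tiles) : ∃ a b l, T.lower.IsBalanced a b ∧ t = T.lower.seg a b l := by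
  obtain ⟨a, b, g, hg⟩ := T.exists_profile ht
  have hconst : ∀ k, a ≤ k → k ≤ b → g k = g a := fun k hak hkb =>
    hT.level_eq ht ((hg.cell_mem _ _).mpr ⟨hak, hkb, rfl⟩)
      ((hg.cell_mem _ _).mpr ⟨le_rfl, hg.le, rfl⟩)
  exact ⟨a, b, g a, hg.isBalanced hconst, hg.eq_seg (fun _ => T.exists_cell ht) hconst⟩

lemma CoverInclusive.crosses_iff (hT : T.CoverInclusive) {s l : ℕ} :
    T.Crosses s l ↔ l < T.crossCount s := by
  have hne : {l | ¬ T.Crosses s l}.Nonempty := by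
    refine ⟨T.colCount s, ?_⟩
    rintro ⟨t, ht, hs, -⟩
    exact lt_irrefl _ (T.bounds_of_cell_mem ht hs).2
  refine ⟨?_, fun hl => not_not.mp (Nat.notMem_of_lt_sInf hl)⟩
  rintro ⟨t, ht, hs, hs'⟩
  by_contra hl
  refine Nat.sInf_mem hne (?_ : T.Crosses s (T.crossCount s))
  rcases (not_lt.mp hl).eq_or_lt with heq | hlt
  · exact heq ▸ ⟨t, ht, hs, hs'⟩
  · have hbounds := T.bounds_of_cell_mem ht hs
    obtain ⟨v, hv, hsv⟩ := T.exists_tile (l := T.crossCount s) hbounds.1 (by omega)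
    obtain ⟨m, -, hm⟩ := hT.exists_below ht hv hs hsv hlt hs'
    exact ⟨v, hv, hsv, hT.level_eq hv hsv hm ▸ hm⟩

lemma CoverInclusive.lt_crossCount (hT : T.CoverInclusive) {a b l s : ℕ}
    (ht : T.lower.seg a b l ∈ T.tiles) (has : a ≤ s) (hsb : s < b) : l < T.crossCount s :=
  hT.crosses_iff.mp ⟨_, ht, DyckPath.cell_mem_seg.mpr ⟨has, hsb.le, rfl⟩,
    DyckPath.cell_mem_seg.mpr ⟨has.trans s.le_succ, hsb, rfl⟩⟩

lemma CoverInclusive.exists_seg (hT : T.CoverInclusive) {s l : ℕ} (hl : l < T.crossCount s) :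
    ∃ a b, T.lower.IsBalanced a b ∧ T.lower.seg a b l ∈ T.tiles ∧ a ≤ s ∧ s < b := by
  obtain ⟨t, ht, hs, hs'⟩ := hT.crosses_iff.mpr hl
  obtain ⟨a, b, l, hab, rfl⟩ := hT.exists_eq_seg ht
  obtain ⟨has, -, rfl⟩ := DyckPath.cell_mem_seg.mp hs
  exact ⟨a, b, hab, ht, has, (DyckPath.cell_mem_seg.mp hs').2.1⟩

lemma CoverInclusive.crossCount_le (hT : T.CoverInclusive) (s : ℕ) :
    T.crossCount s ≤ T.colCount s ∧ T.crossCount s ≤ T.colCount (s + 1) := by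
  constructor <;> by_contra! hlt <;> obtain ⟨t, ht, hs, hs'⟩ := hT.crosses_iff.mpr hlt
  · exact (T.bounds_of_cell_mem ht hs).2.false
  · exact (T.bounds_of_cell_mem ht hs').2.false

lemma CoverInclusive.crossCount_le_of_isInnermost (hT : T.CoverInclusive) {p s : ℕ}
    (hp : T.lower.IsInnermost p s) : T.crossCount p ≤ T.crossCount s := by
  by_contra! hlt
  obtain ⟨a, b, hab, ht, hap, hpb⟩ := hT.exists_seg hlt
  have hps := hp.1.1
  have hsb : s < b := by
    by_contra! hbs
    have hpt := hp.1.2 b hpb hbs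
    have hmin := hab.pt_le p hap hpb.le
    have hends := hab.pt_eq
    omega
  exact lt_irrefl _ (hT.lt_crossCount ht (hap.trans hps.le) hsb)

lemma CoverInclusive.crossCount_le_of_closing (hT : T.CoverInclusive) {p s : ℕ}
    (hs : s < 2 * n) (hp : T.lower.IsInnermost p s) (hdown : T.lower.isUp s = false) :
    T.crossCount s ≤ T.crossCount p := by
  by_contra! hlt
  obtain ⟨a, b, hab, ht, has, hsb⟩ := hT.exists_seg hlt
  have hps := hp.1.1
  have hap : a ≤ p := by
    by_contra! hpa
    have hpt := hp.1.2 a hpa has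
    have hmin := hab.pt_le (s + 1) (by omega) hsb
    have hsucc := T.lower.pt_succ_of_down hs hdown
    have hheight := hp.2
    omega
  exact lt_irrefl _ (hT.lt_crossCount ht hap (hps.trans hsb))

lemma CoverInclusive.isCode (hT : T.CoverInclusive) :
    T.lower.IsCode T.crossCount T.colCount where
  start := T.colCount_zero
  finish := T.colCount_two_mul
  step s hs := by
    have hup := T.upper.pt_succ hs
    rw [T.upper_pt (k := s + 1) hs, T.upper_pt hs.le] at hup
    exact
      { up := fun h => by rw [T.lower.pt_succ_of_up hs h] at hup; split_ifs at hup <;> omega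
        down := fun h => by rw [T.lower.pt_succ_of_down hs h] at hup; split_ifs at hup <;> omega
        le_left := (hT.crossCount_le s).1
        le_right := (hT.crossCount_le s).2
        nested := fun _ => hT.crossCount_le_of_isInnermost
        closing := fun _ => hT.crossCount_le_of_closing hs }

lemma CoverInclusive.isRun (hT : T.CoverInclusive) {a b l : ℕ} (hab : a ≤ b)
    (ht : T.lower.seg a b l ∈ T.tiles) :
    DyckPath.IsRun n T.crossCount T.colCount a b l := by
  have hcell : ∀ k, a ≤ k → k ≤ b → T.lower.cell k l ∈ T.lower.seg a b l := fun k hak hkb =>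
    DyckPath.cell_mem_seg.mpr ⟨hak, hkb, rfl⟩
  have hbounds := T.bounds_of_cell_mem ht (hcell b hab le_rfl)
  refine ⟨hab, hbounds.1.lt_of_ne ?_, (T.bounds_of_cell_mem ht (hcell a le_rfl hab)).2,
    fun s has hsb => hT.lt_crossCount ht has hsb, fun s hs => ?_, ?_⟩
  · rintro rfl
    simpa [colCount_two_mul] using hbounds.2
  · subst hs
    by_contra! hlt
    obtain ⟨v, hv, hsv, hsv'⟩ := hT.crosses_iff.mpr hlt
    rw [T.tile_unique hv ht hsv' (hcell _ le_rfl hab), DyckPath.cell_mem_seg] at hsv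
    omega
  · by_contra! hlt
    obtain ⟨v, hv, hbv, hbv'⟩ := hT.crosses_iff.mpr hlt
    rw [T.tile_unique hv ht hbv (hcell _ hab le_rfl), DyckPath.cell_mem_seg] at hbv'
    omega

lemma CoverInclusive.tiles_eq_runTiles (hT : T.CoverInclusive) :
    T.tiles = T.lower.runTiles T.crossCount T.colCount := by
  ext t
  rw [DyckPath.mem_runTiles]
  constructor
  · intro ht
    obtain ⟨a, b, l, hab, rfl⟩ := hT.exists_eq_seg ht
    exact ⟨a, b, l, hT.isRun hab.le ht, rfl⟩
  · rintro ⟨a, b, l, h, rfl⟩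
    obtain ⟨u, hu, hau⟩ := T.exists_tile (h.le.trans h.lt_two_mul.le) h.lt_col
    obtain ⟨a', b', l', hab', rfl⟩ := hT.exists_eq_seg hu
    obtain ⟨haa', hab, rfl⟩ := DyckPath.cell_mem_seg.mp hau
    obtain ⟨rfl, rfl⟩ := h.eq_of_mem (hT.isRun hab'.le hu) le_rfl h.le haa' hab
    exact hu

lemma CoverInclusive.eq_of_counts_eq {U : DyckTiling n} (hT : T.CoverInclusive)
    (hU : U.CoverInclusive) (hlower : T.lower = U.lower)
    (hcol : ∀ k ≤ 2 * n, T.colCount k = U.colCount k)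
    (hcross : ∀ s < 2 * n, T.crossCount s = U.crossCount s) : T = U := by
  have hupper : T.upper = U.upper := DyckPath.ext_pt fun k hk => by
    rw [T.upper_pt hk, U.upper_pt hk, hlower, hcol k hk]
  have htiles : T.tiles = U.tiles := by
    rw [hT.tiles_eq_runTiles, hU.tiles_eq_runTiles, hlower,
      DyckPath.runTiles_congr hcross hcol]
  cases T
  cases U
  simp only at hlower hupper htiles
  subst hlower hupper htiles
  rfl

variable (T) in
lemma dis_eq_sum : T.dis = ∑ r ∈ Ico 0 (2 * n),
    if T.lower.isUp r = false ∧ T.colCount (r + 1) = T.colCount r + 1 then 1 else 0 := by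
  rw [dis, card_filter, ← range_eq_Ico, ← Fin.sum_univ_eq_sum_range (fun r =>
    if T.lower.isUp r = false ∧ T.colCount (r + 1) = T.colCount r + 1 then 1 else 0)]
  refine sum_congr rfl fun i _ => if_congr ?_ rfl rfl
  rw [← T.lower.isUp_eq i.2, ← T.upper.isUp_eq i.2]
  refine and_congr_right fun hdown => ?_
  rw [T.upper_isUp_eq_true_iff i.2, T.lower.pt_succ_of_down i.2 hdown]
  omega

end DyckTiling

/-! ### Tilings from codes -/

namespace DyckPath

variable {n : ℕ}

lemma card_sub_card_eq {m : ℕ} {g : ℕ → ℤ} (h0 : g 0 = 0)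
    (hstep : ∀ s < m, g (s + 1) = g s + 1 ∨ g (s + 1) = g s - 1) {k : ℕ} (hk : k ≤ m) :
    (#{i : Fin m | (i : ℕ) < k ∧ decide (g (i + 1) = g i + 1) = true} : ℤ) -
      #{i : Fin m | (i : ℕ) < k ∧ decide (g (i + 1) = g i + 1) = false} = g k := by
  have hterm : ∀ i : Fin m,
      ((if (i : ℕ) < k ∧ decide (g (i + 1) = g i + 1) = true then (1 : ℤ) else 0) -
        if (i : ℕ) < k ∧ decide (g (i + 1) = g i + 1) = false then 1 else 0) =
      if (i : ℕ) < k then g (i + 1) - g i else 0 := by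
    intro i
    rcases hstep i i.2 with h | h <;> by_cases hi : (i : ℕ) < k <;> simp [hi, h]
    omega
  rw [card_filter, card_filter]
  push_cast
  rw [← sum_sub_distrib, sum_congr rfl fun i _ => hterm i,
    Fin.sum_univ_eq_sum_range (fun i => if i < k then g (i + 1) - g i else 0) m, ← sum_filter,
    show (range m).filter (· < k) = range k by ext; simp; omega, sum_range_sub, h0, sub_zero]

lemma exists_pt_eq {g : ℕ → ℤ} (h0 : g 0 = 0) (hend : g (2 * n) = 0)
    (hnonneg : ∀ k ≤ 2 * n, 0 ≤ g k)
    (hstep : ∀ s < 2 * n, g (s + 1) = g s + 1 ∨ g (s + 1) = g s - 1) :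
    ∃ Q : DyckPath n, ∀ k ≤ 2 * n, Q.pt k = g k := by
  let step : Fin (2 * n) → Bool := fun i => decide (g (i + 1) = g i + 1)
  have hcount : ∀ k ≤ 2 * n, (#{i : Fin (2 * n) | (i : ℕ) < k ∧ step i = true} : ℤ) -
      #{i : Fin (2 * n) | (i : ℕ) < k ∧ step i = false} = g k := fun k => card_sub_card_eq h0 hstep
  refine ⟨⟨step, ?_, fun k hk => ?_⟩, fun k hk => ?_⟩
  · have hall := hcount (2 * n) le_rfl
    have htotal := card_filter_add_card_filter_not (s := (univ : Finset (Fin (2 * n))))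
      (fun i => step i = true)
    simp only [Bool.not_eq_true, card_univ, Fintype.card_fin] at htotal
    simp only [Fin.is_lt, true_and, hend] at hall
    omega
  · have hk' := hcount k hk
    have hgk := hnonneg k hk
    omega
  · rw [pt_eq]
    exact hcount k hk

lemma ht_le_ht_of_pt_le {P Q : DyckPath n} (h : ∀ k ≤ 2 * n, P.pt k ≤ Q.pt k) (x : ℤ) :
    P.ht x ≤ Q.ht x := by
  rcases lt_or_ge (x + n) 0 with hneg | hnonneg
  · rw [P.ht_eq_zero_of_neg hneg, Q.ht_eq_zero_of_neg hneg]
  · rcases le_or_gt (n : ℤ) x with hge | hlt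
    · rw [P.ht_eq_zero_of_gt hge, Q.ht_eq_zero_of_gt hge]
    · obtain ⟨k, hk⟩ := Int.eq_ofNat_of_zero_le hnonneg
      rw [P.ht_eq_pt hk, Q.ht_eq_pt hk]
      exact h k (by omega)

variable {P : DyckPath n} {t c : ℕ → ℕ}

lemma IsCode.exists_upper (hg : P.IsCode t c) :
    ∃ Q : DyckPath n, ∀ k ≤ 2 * n, Q.pt k = P.pt k + 2 * c k := by
  refine exists_pt_eq (by simp [pt_zero, hg.start]) (by simp [pt_two_mul, hg.finish])
    (fun k hk => by have := P.pt_nonneg hk; positivity) fun s hs => ?_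
  cases hup : P.isUp s
  · have hpt := P.pt_succ_of_down hs hup
    have hcol := (hg.step s hs).down hup
    omega
  · have hpt := P.pt_succ_of_up hs hup
    have hcol := (hg.step s hs).up hup
    omega

lemma disjoint_of_mem_runTiles {u v : Finset (ℤ × ℤ)} (hu : u ∈ P.runTiles t c)
    (hv : v ∈ P.runTiles t c) (huv : u ≠ v) : Disjoint u v := by
  obtain ⟨a, b, l, h, rfl⟩ := mem_runTiles.mp hu
  obtain ⟨a', b', l', h', rfl⟩ := mem_runTiles.mp hv
  refine disjoint_left.mpr fun p hp hp' => huv ?_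
  obtain ⟨k, hak, hkb, rfl⟩ := mem_seg.mp hp
  obtain ⟨hak', hkb', rfl⟩ := cell_mem_seg.mp hp'
  obtain ⟨rfl, rfl⟩ := h.eq_of_mem h' hak hkb hak' hkb'
  rfl

lemma IsCode.mem_biUnion_runTiles (hg : P.IsCode t c) {p : ℤ × ℤ} :
    p ∈ (P.runTiles t c).biUnion id ↔ ∃ k ≤ 2 * n, ∃ l < c k, p = P.cell k l := by
  rw [mem_biUnion]
  constructor
  · rintro ⟨u, hu, hp⟩
    obtain ⟨a, b, l, h, rfl⟩ := mem_runTiles.mp hu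
    obtain ⟨k, hak, hkb, rfl⟩ := mem_seg.mp hp
    exact ⟨k, hkb.trans h.lt_two_mul.le, l, h.lt_count hg hak hkb, rfl⟩
  · rintro ⟨k, hk, l, hl, rfl⟩
    obtain ⟨a, b, h, hak, hkb⟩ := hg.exists_isRun hk hl
    exact ⟨_, mem_runTiles.mpr ⟨a, b, l, h, rfl⟩, cell_mem_seg.mpr ⟨hak, hkb, rfl⟩⟩

/-- The cover-inclusive tiling with lower path `P` and code `(t, c)`. -/
def IsCode.tiling (hg : P.IsCode t c) : DyckTiling n where
  lower := P
  upper := hg.exists_upper.choose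
  below := ht_le_ht_of_pt_le fun k hk => by
    rw [hg.exists_upper.choose_spec k hk]
    omega
  tiles := P.runTiles t c
  isDyck u hu := by
    obtain ⟨a, b, l, h, rfl⟩ := mem_runTiles.mp hu
    exact (h.isBalanced hg).isDyckTile_seg l
  disj _ hu _ hv := disjoint_of_mem_runTiles hu hv
  cover := by
    ext p
    rw [mem_skewCells hg.exists_upper.choose_spec, hg.mem_biUnion_runTiles]

lemma IsCode.coverInclusive_tiling (hg : P.IsCode t c) : hg.tiling.CoverInclusive := by
  rintro u hu v hv ⟨p, hp, q, hq, hpq, hlt⟩ r hr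
  obtain ⟨a, b, l, h, rfl⟩ := mem_runTiles.mp hu
  obtain ⟨a', b', l', h', rfl⟩ := mem_runTiles.mp hv
  obtain ⟨k, hak, hkb, rfl⟩ := mem_seg.mp hp
  obtain ⟨k', hak', hkb', rfl⟩ := mem_seg.mp hq
  obtain ⟨m, ham, hmb, rfl⟩ := mem_seg.mp hr
  simp only [cell] at hpq hlt
  obtain rfl : k = k' := by omega
  obtain ⟨haa', hbb'⟩ := h.subset h' (by omega) hak hkb hak' hkb'
  exact ⟨_, cell_mem_seg.mpr ⟨haa'.trans ham, hmb.trans hbb', rfl⟩⟩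

lemma IsCode.colCount_tiling (hg : P.IsCode t c) {k : ℕ} (hk : k ≤ 2 * n) :
    hg.tiling.colCount k = c k := by
  have hcount := hg.tiling.upper_pt hk
  have hupper : hg.tiling.upper.pt k = hg.tiling.lower.pt k + 2 * c k :=
    hg.exists_upper.choose_spec k hk
  omega

lemma IsCode.crossCount_tiling (hg : P.IsCode t c) {s : ℕ} (hs : s < 2 * n) :
    hg.tiling.crossCount s = t s := by
  refine eq_of_forall_lt_iff fun l => ?_
  rw [← hg.coverInclusive_tiling.crosses_iff]
  constructor
  · rintro ⟨u, hu, hsu, hsu'⟩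
    obtain ⟨a, b, l, h, rfl⟩ := mem_runTiles.mp hu
    obtain ⟨has, -, rfl⟩ := cell_mem_seg.mp hsu
    exact h.cross s has (cell_mem_seg.mp hsu').2.1
  · intro hl
    obtain ⟨a, b, h, has, hsb⟩ := hg.exists_isRun hs.le (hg.lt_of_lt_cross hs hl).1
    have hne : s ≠ b := by
      rintro rfl
      exact hl.not_ge h.right
    exact ⟨_, mem_runTiles.mpr ⟨a, b, l, h, rfl⟩, cell_mem_seg.mpr ⟨has, hsb, rfl⟩,
      cell_mem_seg.mpr ⟨by omega, by omega, rfl⟩⟩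

end DyckPath

namespace DyckTiling

variable {n : ℕ} {P : DyckPath n}

/-- The code of a tiling: the crossing numbers and column counts along the lower path. -/
def code (T : DyckTiling n) : List (ℕ × ℕ) :=
  DyckPath.codeList T.crossCount T.colCount 0 (2 * n)

lemma CoverInclusive.code_mem_codes {T : DyckTiling n} (hT : T.CoverInclusive)
    (hlower : T.lower = P) : T.code ∈ codes P.word [] 0 :=
  (DyckPath.codeList_mem_codes_iff T.colCount_zero).mpr (hlower ▸ hT.isCode)

lemma CoverInclusive.eq_of_code_eq {T U : DyckTiling n} (hT : T.CoverInclusive)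
    (hU : U.CoverInclusive) (hlower : T.lower = U.lower) (hcode : T.code = U.code) : T = U := by
  have hsteps := DyckPath.codeList_eq_codeList_iff.mp hcode
  refine hT.eq_of_counts_eq hU hlower (fun k hk => ?_) fun s hs => (hsteps s hs).1
  rcases k with - | k
  · rw [T.colCount_zero, U.colCount_zero]
  · exact (hsteps k hk).2

lemma exists_code_eq {d : List (ℕ × ℕ)} (hd : d ∈ codes P.word [] 0) :
    ∃ T : DyckTiling n, T.CoverInclusive ∧ T.lower = P ∧ T.code = d := by
  obtain ⟨t, c, hg, rfl⟩ := DyckPath.exists_isCode_of_mem_codes hd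
  exact ⟨hg.tiling, hg.coverInclusive_tiling, rfl, DyckPath.codeList_eq_codeList_iff.mpr
    fun s hs => ⟨hg.crossCount_tiling hs, hg.colCount_tiling hs⟩⟩

lemma codeDis_code (T : DyckTiling n) : codeDis T.lower.word 0 T.code = T.dis := by
  have hdis := DyckPath.codeDis_codeList (P := T.lower) (t := T.crossCount) (c := T.colCount)
    (s := 0) (k := 2 * n) (by omega)
  rwa [List.drop_zero, T.colCount_zero, ← T.dis_eq_sum] at hdis

variable (P) in
theorem finsum_dis_eq_codeSum {R : Type*} [CommSemiring R] (z : R) :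
    ∑ᶠ T : {T : DyckTiling n // T.CoverInclusive ∧ T.lower = P}, z ^ T.1.dis =
      codeSum z P.word [] 0 := by
  rw [codeSum, ← sum_coe_sort, ← finsum_eq_sum_of_fintype]
  refine finsum_eq_of_bijective
    (fun T => ⟨T.1.code, T.2.1.code_mem_codes T.2.2⟩) ⟨?_, ?_⟩ ?_
  · rintro ⟨T, hT, rfl⟩ ⟨U, hU, hlower⟩ hcode
    exact Subtype.ext (hT.eq_of_code_eq hU hlower.symm (Subtype.ext_iff.mp hcode))
  · rintro ⟨d, hd⟩
    obtain ⟨T, hT, hlower, hcode⟩ := exists_code_eq hd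
    exact ⟨⟨T, hT, hlower⟩, Subtype.ext hcode⟩
  · rintro ⟨T, hT, rfl⟩
    rw [T.codeDis_code]

end DyckTiling

/-- If two Dyck paths of order `n` have isomorphic chord posets, then
their cover-inclusive Dyck tilings have the same generating function by the
discrepancy statistic. -/
theorem dis_generating_function_poset_invariant (n : ℕ) (lam1 lam2 : DyckPath n)
    (h : ∃ (C1 : ChordLabeling lam1) (C2 : ChordLabeling lam2),
      ∀ i j : Fin n, (C1.l j < C1.l i ∧ C1.r i < C1.r j) ↔
        (C2.l j < C2.l i ∧ C2.r i < C2.r j)) :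
    ∑ᶠ T : {T : DyckTiling n // T.CoverInclusive ∧ T.lower = lam1},
        (Polynomial.X : Polynomial ℤ) ^ T.1.dis =
      ∑ᶠ T : {T : DyckTiling n // T.CoverInclusive ∧ T.lower = lam2},
        (Polynomial.X : Polynomial ℤ) ^ T.1.dis := by
  obtain ⟨C1, C2, hC⟩ := h
  rw [DyckTiling.finsum_dis_eq_codeSum, DyckTiling.finsum_dis_eq_codeSum]
  have hinj := IsFractionRing.injective (Polynomial ℤ) (FractionRing (Polynomial ℤ))
  have hX0 := (map_ne_zero_iff _ hinj).mpr (Polynomial.X_ne_zero (R := ℤ))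
  have hX1 := (map_eq_one_iff _ hinj).not.mpr (Polynomial.X_ne_C (1 : ℤ))
  apply hinj
  rw [map_codeSum, map_codeSum]
  exact codeSum_word_eq hX0 hX1 C1 C2 hC

end
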